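/- arXiv:1511.04087 — 4 statements merged into one kernel-verified Lean document; each statement's English description precedes it below -/
import Mathlib

section
/- Suppose r > 0 and 0 < |u₀| < r are sufficiently small that T_u maps B̄_r(u) into itself. Then the image T_u(B̄_r(u)) is precompact (totally bounded) in (𝕍, ‖·‖). -/
open Filter Topology MeasureTheory

/-- `A₂ = d(d+2)`. -/
noncomputable def A2 (d : ℕ) : ℝ := (d : ℝ) * ((d : ℝ) + 2)

/-- `A₃ = (1/4)·d·(d+2)²·q²`. -/
noncomputable def A3 (d : ℕ) (q : ℝ) : ℝ := (1/4) * (d : ℝ) * ((d : ℝ) + 2)^2 * q^2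

/-- The fundamental matrix `Φ(t,s)` of the linear system. -/
noncomputable def Phi (d : ℕ) (t s : ℝ) : Matrix (Fin 4) (Fin 4) ℝ :=
  !![1, (A2 d / (2 * (d : ℝ))) * (Real.exp (-2*(t-s)) - 1), 0, 0;
     0, Real.exp (-2*(t-s)), 0, 0;
     0, 0, Real.exp (-2*(t-s)), 0;
     0, 0, 0, Real.exp (-2*(t-s))]

/-- The nonlinearity `b : ℝ⁴ → ℝ⁴`. -/
noncomputable def bfun (d : ℕ) (q : ℝ) (v : Fin 4 → ℝ) : Fin 4 → ℝ :=
  ![ -(v 0) * ((d : ℝ) * (v 0)^2 + (v 2)^2 - 2 * v 2) + (2 * A3 d q / (d : ℝ)) * (v 3)^2,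
     -2 * v 1 * ((d : ℝ) * (v 0)^2 - v 0 + (v 2)^2 - 2 * v 2),
     -(v 2) * ((d : ℝ) * (v 0)^2 + (v 2)^2 - 3 * v 2) + (d : ℝ) * (v 0)^2 + A3 d q * (v 3)^2,
     -(v 3) * ((d : ℝ) * (v 0)^2 - 2 * v 0 + (v 2)^2 - 3 * v 2) ]

/-- The nonlinear integral operator `T_u v(t) = u(t) - ∫_t^∞ Φ(t,s) b(v(s)) ds`. -/
noncomputable def Tmap (d : ℕ) (q : ℝ) (u v : ℝ → Fin 4 → ℝ) : ℝ → Fin 4 → ℝ :=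
  fun t => u t - ∫ s in Set.Ioi t, (Phi d t s).mulVec (bfun d q (v s))

/-- Membership in the Banach space `𝕍`: continuity on `[0,∞)` and finiteness of the
weighted sup norm `sup_{t ≥ 0} e^{2t}|v(t)|`. -/
def memV (v : ℝ → Fin 4 → ℝ) : Prop :=
  ContinuousOn v (Set.Ici 0) ∧ ∃ M : ℝ, ∀ t ≥ (0:ℝ), Real.exp (2*t) * ‖v t‖ ≤ M

/-- The weighted sup norm `‖v‖ = sup_{t ≥ 0} e^{2t}|v(t)|`. -/
noncomputable def Vnorm (v : ℝ → Fin 4 → ℝ) : ℝ :=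
  ⨆ t : Set.Ici (0:ℝ), Real.exp (2 * (t : ℝ)) * ‖v (t : ℝ)‖

/-- Membership in the closed ball `B̄_r(u) = {v ∈ 𝕍 : ‖v - u‖ ≤ r}`. -/
def inBall (r : ℝ) (u v : ℝ → Fin 4 → ℝ) : Prop :=
  memV v ∧ ∀ t ≥ (0:ℝ), Real.exp (2*t) * ‖v t - u t‖ ≤ r

/-- The initial vector `u₀ = ((A₂/(2d))y₀, y₀, z₀, w₀)`. -/
noncomputable def uZero (d : ℕ) (y0 z0 w0 : ℝ) : Fin 4 → ℝ :=
  ![A2 d / (2 * (d : ℝ)) * y0, y0, z0, w0]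

/-- The solution `u(t) = Φ(t,0)u₀ = e^{-2t} u₀` of the linear system. -/
noncomputable def ufun (d : ℕ) (y0 z0 w0 : ℝ) : ℝ → Fin 4 → ℝ :=
  fun t => Real.exp (-2*t) • uZero d y0 z0 w0

/-- An (entrywise sup) norm on 4×4 matrices. -/
noncomputable def matNorm (M : Matrix (Fin 4) (Fin 4) ℝ) : ℝ := ⨆ i, ⨆ j, |M i j|

/-- A uniformly Lipschitz family of functions on `[0,∞)`, uniformly dominated by a function tending
to zero at infinity, is totally bounded for the supremum norm. -/
theorem exists_finite_net_of_lipschitz_of_decay {E : Type*} [NormedAddCommGroup E]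
    [ProperSpace E] {ι : Type*} (g : ι → ℝ → E) (φ : ℝ → ℝ) (K : ℝ)
    (hφ : Tendsto φ atTop (𝓝 0)) (hdecay : ∀ i, ∀ t ≥ (0:ℝ), ‖g i t‖ ≤ φ t)
    (hlip : ∀ i, ∀ s t, 0 ≤ s → s ≤ t → ‖g i t - g i s‖ ≤ K * (t - s))
    {ε : ℝ} (hε : 0 < ε) :
    ∃ F : Set ι, F.Finite ∧ ∀ i, ∃ j ∈ F, ∀ t ≥ (0:ℝ), ‖g i t - g j t‖ ≤ ε := by
  obtain ⟨R, hR⟩ := eventually_atTop.1 (hφ.eventually (gt_mem_nhds (half_pos hε)))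
  set δ : ℝ := ε / (3 * (|K| + 1)) with hδ
  have hδ0 : 0 < δ := by positivity
  obtain ⟨N, hN⟩ := exists_nat_gt (R / δ)
  let grid : ι → Fin (N + 1) → E := fun i k => g i (k * δ)
  have hbdd : Bornology.IsBounded (Set.range grid) := by
    refine isBounded_iff_forall_norm_le.2 ⟨∑ k : Fin (N + 1), |φ (k * δ)|, ?_⟩
    rintro _ ⟨i, rfl⟩
    refine (pi_norm_le_iff_of_nonneg (Finset.sum_nonneg fun _ _ => abs_nonneg _)).2 fun k => ?_
    exact ((hdecay i _ (by positivity)).trans (le_abs_self _)).trans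
      (Finset.single_le_sum (f := fun k : Fin (N + 1) => |φ (k * δ)|)
        (fun _ _ => abs_nonneg _) (Finset.mem_univ k))
  have htb : TotallyBounded (Set.range grid) :=
    hbdd.isCompact_closure.totallyBounded.subset subset_closure
  obtain ⟨F, -, hF, hcover⟩ := Set.exists_subset_image_finite_and.1
    (Set.image_univ (f := grid) ▸
      Metric.finite_approx_of_totallyBounded htb (ε / 3) (by positivity))
  refine ⟨F, hF, fun i => ?_⟩
  obtain ⟨_, ⟨j, hj, rfl⟩, hij⟩ := Set.mem_iUnion₂.1 (hcover ⟨i, Set.mem_univ i, rfl⟩)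
  refine ⟨j, hj, fun t ht => ?_⟩
  rcases le_total R t with hRt | htR
  · linarith [norm_sub_le (g i t) (g j t), hdecay i t ht, hdecay j t ht, hR t hRt]
  · set k := ⌊t / δ⌋₊
    have hk : k < N + 1 := by
      refine Nat.lt_succ_of_le (Nat.floor_le_of_le ?_)
      exact (div_le_div_of_nonneg_right htR hδ0.le).trans hN.le
    have hkt : k * δ ≤ t := (le_div_iff₀ hδ0).1 (Nat.floor_le (by positivity))
    have htk : t - k * δ ≤ δ := by
      have h := (div_lt_iff₀ hδ0).1 (Nat.lt_floor_add_one (t / δ))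
      linarith
    have hstep : ∀ l, ‖g l t - g l (k * δ)‖ ≤ ε / 3 := fun l => by
      refine (hlip l _ _ (by positivity) hkt).trans ?_
      calc K * (t - k * δ) ≤ (|K| + 1) * δ :=
            mul_le_mul (by linarith [le_abs_self K]) htk (sub_nonneg.2 hkt) (by positivity)
        _ = ε / 3 := by rw [hδ]; field_simp
    have hgrid : ‖g i (k * δ) - g j (k * δ)‖ ≤ ε / 3 :=
      (norm_le_pi_norm (grid i - grid j) ⟨k, hk⟩).trans
        (by rw [← dist_eq_norm]; exact (Metric.mem_ball.1 hij).le)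
    calc ‖g i t - g j t‖ = ‖(g i t - g i (k * δ)) + (g i (k * δ) - g j (k * δ))
          - (g j t - g j (k * δ))‖ := by congr 1; abel
      _ ≤ ε / 3 + ε / 3 + ε / 3 :=
          (norm_sub_le _ _).trans
            (add_le_add ((norm_add_le _ _).trans (add_le_add (hstep i) hgrid)) (hstep j))
      _ = ε := by ring

/-- The tail integral of a function dominated by `B * exp (-β s)` with `β ≥ 1`. -/
theorem norm_integral_Ioi_le_of_exp_bound {E : Type*} [NormedAddCommGroup E] [NormedSpace ℝ E]
    {f : ℝ → E} {B β t : ℝ} (hβ : 1 ≤ β) (hB : 0 ≤ B)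
    (hbound : ∀ s, t ≤ s → ‖f s‖ ≤ B * Real.exp (-β * s)) :
    ‖∫ s in Set.Ioi t, f s‖ ≤ B * Real.exp (-β * t) := by
  have hint : IntegrableOn (fun s => B * Real.exp (-β * s)) (Set.Ioi t) :=
    (integrableOn_exp_mul_Ioi (by linarith) t).const_mul B
  refine (norm_integral_le_of_norm_le hint ?_).trans ?_
  · filter_upwards [self_mem_ae_restrict measurableSet_Ioi] with s hs
    exact hbound s (le_of_lt hs)
  · rw [integral_const_mul, integral_exp_mul_Ioi (by linarith)]
    gcongr
    rw [neg_div_neg_eq]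
    exact div_le_self (Real.exp_pos _).le hβ

/-- A continuous function dominated by an exponential is integrable on half-lines. -/
theorem integrableOn_Ioi_of_exp_bound {E : Type*} [NormedAddCommGroup E]
    {f : ℝ → E} {B β t : ℝ} (hβ : 0 < β) (hf : ContinuousOn f (Set.Ici t))
    (hbound : ∀ s, t ≤ s → ‖f s‖ ≤ B * Real.exp (-β * s)) :
    IntegrableOn f (Set.Ioi t) := by
  have hint : IntegrableOn (fun s => B * Real.exp (-β * s)) (Set.Ioi t) :=
    (integrableOn_exp_mul_Ioi (by linarith) t).const_mul B
  refine hint.mono' ((hf.mono Set.Ioi_subset_Ici_self).aestronglyMeasurable measurableSet_Ioi) ?_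
  filter_upwards [self_mem_ae_restrict measurableSet_Ioi] with s hs
  exact hbound s (le_of_lt hs)

/-- The weighted tail integral `e^{αt} ∫_t^∞ f` of a function with `‖f s‖ ≤ B e^{-(α+2)s}` is
Lipschitz on `[0,∞)`. -/
theorem norm_exp_smul_integral_Ioi_sub_le {E : Type*} [NormedAddCommGroup E] [NormedSpace ℝ E]
    {f : ℝ → E} {B α s t : ℝ} (hα : 0 ≤ α) (hB : 0 ≤ B) (hf : ContinuousOn f (Set.Ici 0))
    (hbound : ∀ x, 0 ≤ x → ‖f x‖ ≤ B * Real.exp (-(α + 2) * x)) (hs : 0 ≤ s) (hst : s ≤ t) :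
    ‖Real.exp (α * t) • (∫ x in Set.Ioi t, f x) - Real.exp (α * s) • ∫ x in Set.Ioi s, f x‖
      ≤ (α + 1) * B * (t - s) := by
  have hint : IntegrableOn f (Set.Ioi s) :=
    integrableOn_Ioi_of_exp_bound (by linarith) (hf.mono (Set.Ici_subset_Ici.2 hs))
      fun x hx => hbound x (hs.trans hx)
  have hsplit : (∫ x in Set.Ioi s, f x) = (∫ x in s..t, f x) + ∫ x in Set.Ioi t, f x :=
    (intervalIntegral.integral_interval_add_Ioi hint
      (hint.mono_set (Set.Ioi_subset_Ioi hst))).symm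
  have htail : ‖∫ x in Set.Ioi t, f x‖ ≤ B * Real.exp (-(α + 2) * t) :=
    norm_integral_Ioi_le_of_exp_bound (by linarith) hB fun x hx =>
      hbound x ((hs.trans hst).trans hx)
  have hmid : ‖∫ x in s..t, f x‖ ≤ B * Real.exp (-(α + 2) * s) * (t - s) := by
    have h := intervalIntegral.norm_integral_le_of_norm_le_const (f := f) (a := s) (b := t)
      (C := B * Real.exp (-(α + 2) * s)) ?_
    · rwa [abs_of_nonneg (sub_nonneg.2 hst)] at h
    · intro x hx
      rw [Set.uIoc_of_le hst] at hx
      refine (hbound x (hs.trans hx.1.le)).trans ?_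
      gcongr B * Real.exp ?_
      nlinarith [hx.1]
  have hexp : Real.exp (α * t) - Real.exp (α * s) ≤ α * (t - s) * Real.exp (α * t) := by
    have h := Real.add_one_le_exp (-(α * (t - s)))
    have h' : Real.exp (α * s) = Real.exp (-(α * (t - s))) * Real.exp (α * t) := by
      rw [← Real.exp_add]; ring_nf
    rw [h']
    nlinarith [Real.exp_pos (α * t)]
  have hexp0 : 0 ≤ Real.exp (α * t) - Real.exp (α * s) :=
    sub_nonneg.2 (Real.exp_le_exp.2 (by gcongr))
  have hprod : ∀ x, 0 ≤ x → Real.exp (α * x) * Real.exp (-(α + 2) * x) ≤ 1 := fun x hx => by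
    rw [← Real.exp_add, Real.exp_le_one_iff]
    linarith
  have hdecomp : Real.exp (α * t) • (∫ x in Set.Ioi t, f x)
      - Real.exp (α * s) • (∫ x in Set.Ioi s, f x)
      = (Real.exp (α * t) - Real.exp (α * s)) • (∫ x in Set.Ioi t, f x)
        - Real.exp (α * s) • ∫ x in s..t, f x := by
    rw [hsplit]; module
  have hts : 0 ≤ t - s := sub_nonneg.2 hst
  rw [hdecomp]
  calc _ ≤ (Real.exp (α * t) - Real.exp (α * s)) * ‖∫ x in Set.Ioi t, f x‖
        + Real.exp (α * s) * ‖∫ x in s..t, f x‖ := by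
        refine (norm_sub_le _ _).trans_eq ?_
        rw [norm_smul, norm_smul, Real.norm_of_nonneg hexp0, Real.norm_of_nonneg (Real.exp_pos _).le]
    _ ≤ (α * (t - s) * Real.exp (α * t)) * (B * Real.exp (-(α + 2) * t))
        + Real.exp (α * s) * (B * Real.exp (-(α + 2) * s) * (t - s)) := by
        gcongr
    _ = α * (t - s) * B * (Real.exp (α * t) * Real.exp (-(α + 2) * t))
        + B * (t - s) * (Real.exp (α * s) * Real.exp (-(α + 2) * s)) := by ring
    _ ≤ α * (t - s) * B * 1 + B * (t - s) * 1 := by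
        gcongr
        · exact hprod t (hs.trans hst)
        · exact hprod s hs
    _ = (α + 1) * B * (t - s) := by ring

theorem continuous_bfun (d : ℕ) (q : ℝ) : Continuous (bfun d q) := by
  refine continuous_pi fun i => ?_
  fin_cases i <;> simp only [bfun] <;> simp <;> fun_prop

/-- The nonlinearity is quadratically small on bounded sets. -/
theorem exists_norm_bfun_le (d : ℕ) (q M : ℝ) :
    ∃ B, 0 ≤ B ∧ ∀ v, ‖v‖ ≤ M → ‖bfun d q v‖ ≤ B * ‖v‖ ^ 2 := by
  refine ⟨2 * ((d + 1) * |M| + 5) + |2 * A3 d q / d| + d + |A3 d q|, by positivity,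
    fun v hv => ?_⟩
  have hv' : ‖v‖ ≤ |M| := hv.trans (le_abs_self M)
  set L := ‖v‖
  have hL : 0 ≤ L := norm_nonneg v
  have hcoord : ∀ i, |v i| ≤ L := fun i => norm_le_pi_norm v i
  have hquad : ∀ c : ℝ, ∀ i, |c * v i ^ 2| ≤ |c| * L ^ 2 := fun c i => by
    rw [abs_mul, abs_pow]
    gcongr
    exact hcoord i
  have hd : |(d : ℝ) * v 0 ^ 2 + v 2 ^ 2| ≤ (d + 1) * |M| * L := by
    have h0 := hquad d 0
    have h2 := hquad 1 2
    rw [Nat.abs_cast] at h0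
    rw [one_mul, abs_one] at h2
    calc _ ≤ (d + 1) * L ^ 2 := by linarith [abs_add_le ((d : ℝ) * v 0 ^ 2) (v 2 ^ 2)]
      _ = (d + 1) * L * L := by ring
      _ ≤ (d + 1) * |M| * L := by gcongr
  have hfactor : ∀ i, ∀ x : ℝ, |x| ≤ 5 * L →
      |v i * (d * v 0 ^ 2 + v 2 ^ 2 + x)| ≤ ((d + 1) * |M| + 5) * L ^ 2 := fun i x hx => by
    rw [abs_mul]
    calc _ ≤ L * ((d + 1) * |M| * L + 5 * L) := by
          gcongr
          · exact hcoord i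
          · exact (abs_add_le _ _).trans (add_le_add hd hx)
      _ = _ := by ring
  have hc0 : 0 ≤ ((d + 1) * |M| + 5) * L ^ 2 := by positivity
  have hc1 : 0 ≤ |2 * A3 d q / d| * L ^ 2 := by positivity
  have hc2 : 0 ≤ d * L ^ 2 := by positivity
  have hc3 : 0 ≤ |A3 d q| * L ^ 2 := by positivity
  have h0 := abs_le.1 (hcoord 0)
  have h2 := abs_le.1 (hcoord 2)
  refine (pi_norm_le_iff_of_nonneg (by positivity)).2 fun i => ?_
  rw [Real.norm_eq_abs]
  fin_cases i
  · change |-v 0 * (d * v 0 ^ 2 + v 2 ^ 2 - 2 * v 2) + 2 * A3 d q / d * v 3 ^ 2| ≤ _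
    have hf := abs_le.1 (hfactor 0 (-2 * v 2) (abs_le.2 ⟨by linarith, by linarith⟩))
    have hq := abs_le.1 (hquad (2 * A3 d q / d) 3)
    exact abs_le.2 ⟨by linarith, by linarith⟩
  · change |-2 * v 1 * (d * v 0 ^ 2 - v 0 + v 2 ^ 2 - 2 * v 2)| ≤ _
    have hf := abs_le.1 (hfactor 1 (-v 0 - 2 * v 2) (abs_le.2 ⟨by linarith, by linarith⟩))
    exact abs_le.2 ⟨by linarith, by linarith⟩
  · change |-v 2 * (d * v 0 ^ 2 + v 2 ^ 2 - 3 * v 2) + d * v 0 ^ 2 + A3 d q * v 3 ^ 2| ≤ _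
    have hf := abs_le.1 (hfactor 2 (-3 * v 2) (abs_le.2 ⟨by linarith, by linarith⟩))
    have hq := abs_le.1 (hquad d 0)
    have hq' := abs_le.1 (hquad (A3 d q) 3)
    rw [Nat.abs_cast] at hq
    exact abs_le.2 ⟨by linarith, by linarith⟩
  · change |-v 3 * (d * v 0 ^ 2 - 2 * v 0 + v 2 ^ 2 - 3 * v 2)| ≤ _
    have hf := abs_le.1 (hfactor 3 (-2 * v 0 - 3 * v 2) (abs_le.2 ⟨by linarith, by linarith⟩))
    exact abs_le.2 ⟨by linarith, by linarith⟩

/-- The part of `Φ(t,s)` independent of `t` and `s`. -/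
noncomputable def phiConst (d : ℕ) : (Fin 4 → ℝ) →L[ℝ] (Fin 4 → ℝ) :=
  (Matrix.mulVecLin !![1, -(A2 d / (2 * (d : ℝ))), 0, 0;
     0, 0, 0, 0; 0, 0, 0, 0; 0, 0, 0, 0]).toContinuousLinearMap

/-- The coefficient of `e^{-2(t-s)}` in `Φ(t,s)`. -/
noncomputable def phiExp (d : ℕ) : (Fin 4 → ℝ) →L[ℝ] (Fin 4 → ℝ) :=
  (Matrix.mulVecLin !![0, A2 d / (2 * (d : ℝ)), 0, 0;
     0, 1, 0, 0; 0, 0, 1, 0; 0, 0, 0, 1]).toContinuousLinearMap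

theorem Phi_mulVec (d : ℕ) (t s : ℝ) (x : Fin 4 → ℝ) :
    (Phi d t s).mulVec x =
      phiConst d x + Real.exp (-2 * t) • Real.exp (2 * s) • phiExp d x := by
  have h : Real.exp (-2 * (t - s)) = Real.exp (-2 * t) * Real.exp (2 * s) := by
    rw [← Real.exp_add]; ring_nf
  rw [Phi, h]
  ext i
  fin_cases i <;>
    simp [phiConst, phiExp, Matrix.mulVec, dotProduct, Fin.sum_univ_four] <;> ring

theorem norm_ufun (d : ℕ) (y0 z0 w0 t : ℝ) :
    ‖ufun d y0 z0 w0 t‖ = Real.exp (-2 * t) * ‖uZero d y0 z0 w0‖ := by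
  rw [ufun, norm_smul, Real.norm_of_nonneg (Real.exp_pos _).le]

/-- If `r` and `0 < |u₀| < r` are small enough that `T_u` maps `B̄_r(u)` into itself, then
the image `T_u(B̄_r(u))` is totally bounded in the norm of `𝕍`. -/
theorem stmt3 (d : ℕ) (hd : 2 ≤ d) (q : ℝ) (y0 z0 w0 r : ℝ) (hr : 0 < r)
    (hu0 : 0 < ‖uZero d y0 z0 w0‖) (hu0r : ‖uZero d y0 z0 w0‖ < r)
    (hmap : ∀ v, inBall r (ufun d y0 z0 w0) v →
      inBall r (ufun d y0 z0 w0) (Tmap d q (ufun d y0 z0 w0) v)) :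
    ∀ ε > (0:ℝ), ∃ F : Set (ℝ → Fin 4 → ℝ), F.Finite ∧
      ∀ v, inBall r (ufun d y0 z0 w0) v →
        ∃ w ∈ F, ∀ t ≥ (0:ℝ),
          Real.exp (2*t) * ‖Tmap d q (ufun d y0 z0 w0) v t - w t‖ ≤ ε := by
  intro ε hε
  set u := ufun d y0 z0 w0 with hu
  set M := 2 * r with hM
  obtain ⟨B, hB, hbB⟩ := exists_norm_bfun_le d q M
  have hsize : ∀ v, inBall r u v → ∀ t ≥ (0:ℝ), ‖v t‖ ≤ M * Real.exp (-2 * t) := by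
    intro v hv t ht
    have h := hv.2 t ht
    have hinv : Real.exp (-2 * t) * Real.exp (2 * t) = 1 := by
      rw [← Real.exp_add]; simp
    have h1 : ‖v t - u t‖ ≤ Real.exp (-2 * t) * r := by
      calc ‖v t - u t‖ = Real.exp (-2 * t) * (Real.exp (2 * t) * ‖v t - u t‖) := by
            rw [← mul_assoc, hinv, one_mul]
        _ ≤ _ := by gcongr
    have h2 : ‖u t‖ ≤ Real.exp (-2 * t) * r := by
      rw [hu, norm_ufun]; gcongr
    linarith [norm_sub_norm_le (v t) (u t)]
  have hb : ∀ v, inBall r u v → ∀ t ≥ (0:ℝ),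
      ‖bfun d q (v t)‖ ≤ B * M ^ 2 * Real.exp (-4 * t) := by
    intro v hv t ht
    have hvt := hsize v hv t ht
    have hle : ‖v t‖ ≤ M := hvt.trans (mul_le_of_le_one_right (by positivity)
      (Real.exp_le_one_iff.2 (by linarith)))
    calc ‖bfun d q (v t)‖ ≤ B * ‖v t‖ ^ 2 := hbB _ hle
      _ ≤ B * (M * Real.exp (-2 * t)) ^ 2 := by gcongr
      _ = B * M ^ 2 * Real.exp (-4 * t) := by
        rw [mul_pow, ← Real.exp_nat_mul]; ring_nf
  let p : (ℝ → Fin 4 → ℝ) → ℝ → Fin 4 → ℝ := fun v s => phiConst d (bfun d q (v s))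
  let f : (ℝ → Fin 4 → ℝ) → ℝ → Fin 4 → ℝ :=
    fun v s => Real.exp (2 * s) • phiExp d (bfun d q (v s))
  set Cp := ‖phiConst d‖ * (B * M ^ 2) with hCp
  set Cf := ‖phiExp d‖ * (B * M ^ 2) with hCf
  have hCp0 : 0 ≤ Cp := by positivity
  have hCf0 : 0 ≤ Cf := by positivity
  have hp : ∀ v, inBall r u v → ∀ s, 0 ≤ s → ‖p v s‖ ≤ Cp * Real.exp (-(2 + 2) * s) := by
    intro v hv s hs
    refine ((phiConst d).le_opNorm _).trans ?_
    rw [hCp, mul_assoc]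
    gcongr
    rw [show -(2 + 2 : ℝ) = -4 by norm_num]
    exact hb v hv s hs
  have hf : ∀ v, inBall r u v → ∀ s, 0 ≤ s → ‖f v s‖ ≤ Cf * Real.exp (-(0 + 2) * s) := by
    intro v hv s hs
    rw [norm_smul, Real.norm_of_nonneg (Real.exp_pos _).le]
    calc _ ≤ Real.exp (2 * s) * (‖phiExp d‖ * (B * M ^ 2 * Real.exp (-4 * s))) := by
          gcongr
          exact ((phiExp d).le_opNorm _).trans (by gcongr; exact hb v hv s hs)
      _ = Cf * (Real.exp (2 * s) * Real.exp (-4 * s)) := by ring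
      _ = _ := by rw [← Real.exp_add]; ring_nf
  have hbc : ∀ v, inBall r u v → ContinuousOn (fun s => bfun d q (v s)) (Set.Ici 0) :=
    fun v hv => (continuous_bfun d q).comp_continuousOn hv.1.1
  have hpc : ∀ v, inBall r u v → ContinuousOn (p v) (Set.Ici 0) :=
    fun v hv => (phiConst d).continuous.comp_continuousOn (hbc v hv)
  have hfc : ∀ v, inBall r u v → ContinuousOn (f v) (Set.Ici 0) := fun v hv =>
    ContinuousOn.smul (f := fun s : ℝ => Real.exp (2 * s)) (by fun_prop)
      ((phiExp d).continuous.comp_continuousOn (hbc v hv))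
  let g : {v // inBall r u v} → ℝ → Fin 4 → ℝ := fun v t =>
    Real.exp (2 * t) • (∫ s in Set.Ioi t, p v s) + Real.exp (0 * t) • ∫ s in Set.Ioi t, f v s
  have hT : ∀ v : {v // inBall r u v}, ∀ t ≥ (0:ℝ),
      Real.exp (2 * t) • (u t - Tmap d q u v t) = g v t := by
    intro v t ht
    have hinv : Real.exp (2 * t) * Real.exp (-2 * t) = 1 := by
      rw [← Real.exp_add]; simp
    have hpi : IntegrableOn (p v) (Set.Ioi t) :=
      integrableOn_Ioi_of_exp_bound (by norm_num) ((hpc v v.2).mono (Set.Ici_subset_Ici.2 ht))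
        fun s hs => hp v v.2 s (ht.trans hs)
    have hfi : IntegrableOn (f v) (Set.Ioi t) :=
      integrableOn_Ioi_of_exp_bound (by norm_num) ((hfc v v.2).mono (Set.Ici_subset_Ici.2 ht))
        fun s hs => hf v v.2 s (ht.trans hs)
    have hsum : (∫ s in Set.Ioi t, (Phi d t s).mulVec (bfun d q (v.1 s)))
        = (∫ s in Set.Ioi t, p v s) + Real.exp (-2 * t) • ∫ s in Set.Ioi t, f v s := by
      simp_rw [Phi_mulVec]
      rw [← integral_smul]
      exact integral_add hpi (hfi.smul (Real.exp (-2 * t)))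
    simp only [Tmap, g]
    rw [sub_sub_cancel, hsum, smul_add, smul_smul, hinv, zero_mul, Real.exp_zero]
  have hdecay : ∀ v, ∀ t ≥ (0:ℝ), ‖g v t‖ ≤ (Cp + Cf) * Real.exp (-2 * t) := by
    intro v t ht
    have h1 : ‖∫ s in Set.Ioi t, p v s‖ ≤ Cp * Real.exp (-(2 + 2) * t) :=
      norm_integral_Ioi_le_of_exp_bound (by norm_num) hCp0 fun s hs => hp v v.2 s (ht.trans hs)
    have h2 : ‖∫ s in Set.Ioi t, f v s‖ ≤ Cf * Real.exp (-(0 + 2) * t) :=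
      norm_integral_Ioi_le_of_exp_bound (by norm_num) hCf0 fun s hs => hf v v.2 s (ht.trans hs)
    calc ‖g v t‖ ≤ Real.exp (2 * t) * ‖∫ s in Set.Ioi t, p v s‖ + ‖∫ s in Set.Ioi t, f v s‖ := by
          refine (norm_add_le _ _).trans_eq ?_
          rw [norm_smul, norm_smul, zero_mul, Real.exp_zero, norm_one, one_mul,
            Real.norm_of_nonneg (Real.exp_pos _).le]
      _ ≤ Real.exp (2 * t) * (Cp * Real.exp (-(2 + 2) * t)) + Cf * Real.exp (-(0 + 2) * t) := by
          gcongr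
      _ = Cp * (Real.exp (2 * t) * Real.exp (-(2 + 2) * t)) + Cf * Real.exp (-(0 + 2) * t) := by
          ring
      _ = (Cp + Cf) * Real.exp (-2 * t) := by rw [← Real.exp_add]; ring_nf
  have hlip : ∀ v, ∀ s t, 0 ≤ s → s ≤ t → ‖g v t - g v s‖ ≤ (3 * Cp + Cf) * (t - s) := by
    intro v s t hs hst
    have h1 := norm_exp_smul_integral_Ioi_sub_le (α := 2) (by norm_num) hCp0 (hpc v v.2)
      (hp v v.2) hs hst
    have h2 := norm_exp_smul_integral_Ioi_sub_le (α := 0) le_rfl hCf0 (hfc v v.2)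
      (hf v v.2) hs hst
    simp only [g]
    rw [add_sub_add_comm]
    refine (norm_add_le _ _).trans ((add_le_add h1 h2).trans_eq ?_)
    ring
  have hφ : Tendsto (fun t : ℝ => (Cp + Cf) * Real.exp (-2 * t)) atTop (𝓝 0) := by
    have h : Tendsto (fun t : ℝ => -2 * t) atTop atBot :=
      tendsto_id.const_mul_atTop_of_neg (by norm_num)
    simpa using (Real.tendsto_exp_atBot.comp h).const_mul (Cp + Cf)
  obtain ⟨F, hF, hcover⟩ := exists_finite_net_of_lipschitz_of_decay g _ _ hφ hdecay hlip hε
  refine ⟨(fun v => Tmap d q u v.1) '' F, hF.image _, fun v hv => ?_⟩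
  obtain ⟨j, hj, hclose⟩ := hcover ⟨v, hv⟩
  refine ⟨_, Set.mem_image_of_mem _ hj, fun t ht => ?_⟩
  have h := hclose t ht
  rw [← hT _ t ht, ← hT _ t ht, ← smul_sub, sub_sub_sub_cancel_left, norm_smul,
    Real.norm_of_nonneg (Real.exp_pos _).le, norm_sub_rev] at h
  exact h
end

section
/- For every pair of real numbers α, β there exists a solution (X, Ỹ, Z̃, W) : [0,∞) → ℝ⁴ of the system (★★) such that: (a) Ỹ(t) > 0 for all t ≥ 0; (b) sup_{t≥0} e^{2t}|(X, Ỹ, Z̃, W)(t)| < ∞ (in particular the solution tends to (0,0,0,0) as t → ∞); (c) lim_{t→∞} Z̃(t)/Ỹ(t) = α; and (d) lim_{t→∞} W(t)/Ỹ(t) = β. -/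
open Filter Topology

lemma continuous_mul_integral_pow_mul_comp (k : ℕ) {g : ℝ → ℝ} (hg : Continuous g) :
    Continuous fun s : ℝ => s * ∫ θ in (0 : ℝ)..1, θ ^ k * g (s * θ) := by
  refine continuous_id.mul ?_
  apply intervalIntegral.continuous_parametric_intervalIntegral_of_continuous'
  fun_prop

lemma hasDerivAt_mul_integral_pow_mul_comp (k : ℕ) {g : ℝ → ℝ} (hg : Continuous g) {s : ℝ}
    (hs : 0 < s) :
    HasDerivAt (fun s : ℝ => s * ∫ θ in (0 : ℝ)..1, θ ^ k * g (s * θ))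
      (g s - k * (s * ∫ θ in (0 : ℝ)..1, θ ^ k * g (s * θ)) / s) s := by
  have key : ∀ r : ℝ, 0 < r → r * ∫ θ in (0 : ℝ)..1, θ ^ k * g (r * θ) =
      (∫ σ in (0 : ℝ)..r, σ ^ k * g σ) / r ^ k := by
    intro r hr
    have h := intervalIntegral.smul_integral_comp_mul_left (a := 0) (b := 1)
      (fun σ : ℝ => σ ^ k * g σ) r
    simp only [mul_zero, mul_one, mul_pow, mul_assoc, smul_eq_mul,
      intervalIntegral.integral_const_mul] at h
    rw [← h]
    field_simp
  have hc : Continuous fun σ : ℝ => σ ^ k * g σ := by fun_prop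
  have hd := (hc.integral_hasStrictDerivAt 0 s).hasDerivAt.div (hasDerivAt_pow k s)
    (pow_pos hs k).ne'
  have hev : (fun r : ℝ => r * ∫ θ in (0 : ℝ)..1, θ ^ k * g (r * θ)) =ᶠ[𝓝 s]
      fun r => (∫ σ in (0 : ℝ)..r, σ ^ k * g σ) / r ^ k :=
    (eventually_gt_nhds hs).mono key
  refine (hd.congr_of_eventuallyEq hev).congr_deriv ?_
  rw [key s hs]
  rcases k with _ | k
  · simp
  · simp only [Nat.add_sub_cancel]
    field_simp
    ring

/-- A singular initial value problem of Briot–Bouquet type, with globally Lipschitz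
nonlinearity, is locally solvable. -/
lemma exists_hasDerivAt_singular_of_lipschitzWith {ι : Type*} [Fintype ι] (k : ι → ℕ)
    {K : NNReal} {g : ℝ × (ι → ℝ) → ι → ℝ} (hg : LipschitzWith K g) (v₀ : ι → ℝ) :
    ∃ T > 0, ∃ v : ℝ → ι → ℝ, Continuous v ∧ v 0 = v₀ ∧ ∀ s ∈ Set.Ioo 0 T, ∀ i,
      HasDerivAt (fun r => v r i) (g (s, v s) i - k i * (v s i - v₀ i) / s) s := by
  obtain ⟨T, hT, hKT⟩ : ∃ T : ℝ, 0 < T ∧ T * K < 1 := by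
    refine ⟨1 / (K + 1), by positivity, ?_⟩
    rw [one_div, inv_mul_lt_one₀ (by positivity)]
    linarith
  let F : C(Set.Icc 0 T, ι → ℝ) → ℝ → ι → ℝ :=
    fun V σ => g (σ, V (Set.projIcc 0 T hT.le σ))
  have hF : ∀ V i, Continuous fun σ => F V σ i := fun V i =>
    (continuous_apply i).comp (hg.continuous.comp
      (continuous_id.prodMk (V.continuous.comp continuous_projIcc)))
  let J : C(Set.Icc 0 T, ι → ℝ) → ℝ → ι → ℝ :=
    fun V s i => v₀ i + s * ∫ θ in (0 : ℝ)..1, θ ^ k i * F V (s * θ) i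
  have hJ : ∀ V, Continuous (J V) := fun V => continuous_pi fun i =>
    continuous_const.add (continuous_mul_integral_pow_mul_comp (k i) (hF V i))
  let Φ : C(Set.Icc 0 T, ι → ℝ) → C(Set.Icc 0 T, ι → ℝ) :=
    fun V => ⟨fun s => J V s, (hJ V).comp continuous_subtype_val⟩
  have hΦ : ContractingWith (Real.toNNReal (T * K)) Φ := by
    refine ⟨by simpa using hKT, LipschitzWith.of_dist_le_mul fun V V' => ?_⟩
    rw [Real.coe_toNNReal _ (by positivity)]
    refine (ContinuousMap.dist_le (by positivity)).2 fun s => ?_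
    refine (dist_pi_le_iff (by positivity)).2 fun i => ?_
    have hs := s.2
    have hint : ∀ V, IntervalIntegrable (fun θ : ℝ => θ ^ k i * F V (s * θ) i)
        MeasureTheory.volume 0 1 := fun V => by
      have := hF V i
      exact Continuous.intervalIntegrable (by fun_prop) _ _
    have hb : ‖∫ θ in (0 : ℝ)..1, (θ ^ k i * F V (s * θ) i - θ ^ k i * F V' (s * θ) i)‖
        ≤ K * dist V V' * |(1 : ℝ) - 0| := by
      refine intervalIntegral.norm_integral_le_of_norm_le_const fun θ hθ => ?_
      rw [Set.uIoc_of_le zero_le_one] at hθ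
      rw [← mul_sub, norm_mul, Real.norm_of_nonneg (pow_nonneg hθ.1.le _)]
      refine (mul_le_of_le_one_left (norm_nonneg _) (pow_le_one₀ hθ.1.le hθ.2)).trans ?_
      rw [← dist_eq_norm]
      refine (dist_le_pi_dist _ _ i).trans ((hg.dist_le_mul _ _).trans ?_)
      gcongr
      rw [Prod.dist_eq, dist_self]
      exact max_le dist_nonneg (ContinuousMap.dist_apply_le_dist _)
    change dist (v₀ i + s * _) (v₀ i + s * _) ≤ _
    rw [dist_add_left, dist_eq_norm, ← mul_sub, ← intervalIntegral.integral_sub (hint V) (hint V'),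
      norm_mul, Real.norm_of_nonneg hs.1, mul_assoc]
    rw [sub_zero, abs_one, mul_one] at hb
    exact mul_le_mul hs.2 hb (norm_nonneg _) hT.le
  obtain ⟨V, hV, -⟩ := hΦ.exists_fixedPoint 0 (edist_ne_top _ _)
  refine ⟨T, hT, J V, hJ V, by ext i; simp [J], fun s hs i => ?_⟩
  have hVs : V (Set.projIcc 0 T hT.le s) = J V s := by
    rw [Set.projIcc_of_mem hT.le ⟨hs.1.le, hs.2.le⟩]
    exact (DFunLike.congr_fun hV _).symm
  have h := (hasDerivAt_mul_integral_pow_mul_comp (k i) (hF V i) hs.1).const_add (v₀ i)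
  have e : F V s i = g (s, J V s) i := by simp only [F, hVs]
  rw [e] at h
  refine h.congr_deriv ?_
  simp only [J, add_sub_cancel_left]

/-- A singular initial value problem of Briot–Bouquet type, with continuously differentiable
nonlinearity, is locally solvable. -/
lemma exists_hasDerivAt_singular_of_contDiff {ι : Type*} [Fintype ι] (k : ι → ℕ)
    {H : ℝ × (ι → ℝ) → ι → ℝ} (hH : ContDiff ℝ 1 H) (v₀ : ι → ℝ) :
    ∃ T > 0, ∃ v : ℝ → ι → ℝ, Continuous v ∧ v 0 = v₀ ∧ ∀ s ∈ Set.Ioo 0 T, ∀ i,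
      HasDerivAt (fun r => v r i) (H (s, v s) i - k i * (v s i - v₀ i) / s) s := by
  obtain ⟨K, U, hU, hK⟩ := (hH.contDiffAt (x := (0, v₀))).exists_lipschitzOnWith
  obtain ⟨g, hg, hgU⟩ := hK.extend_pi
  obtain ⟨T, hT, v, hv, hv0, hder⟩ := exists_hasDerivAt_singular_of_lipschitzWith k hg v₀
  have hmem : ∀ᶠ s in 𝓝 (0 : ℝ), (s, v s) ∈ U := by
    have : Tendsto (fun s => (s, v s)) (𝓝 0) (𝓝 (0, v₀)) := by
      simpa [hv0] using (continuous_id.prodMk hv).tendsto 0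
    exact this.eventually hU
  obtain ⟨ε, hε, hball⟩ := Metric.eventually_nhds_iff.1 hmem
  refine ⟨min T ε, lt_min hT hε, v, hv, hv0, fun s hs i => ?_⟩
  have hs' : (s, v s) ∈ U := hball (by
    rw [Real.dist_eq, sub_zero, abs_of_pos hs.1]; exact hs.2.trans_le (min_le_right _ _))
  rw [hgU hs']
  exact hder s ⟨hs.1, hs.2.trans_le (min_le_left _ _)⟩ i

/-- For all `α, β ∈ ℝ` there is a solution `(X, Ỹ, Z̃, W)` of the system (★★) on `[0,∞)`
with `Ỹ > 0`, `sup_{t ≥ 0} e^{2t}|(X,Ỹ,Z̃,W)(t)| < ∞` (in particular the solution tends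
to `(0,0,0,0)`), `Z̃/Ỹ → α` and `W/Ỹ → β` as `t → ∞`. -/
theorem stmt5 (d : ℕ) (hd : 2 ≤ d) (q : ℝ) (α β : ℝ) :
    ∃ X Yt Zt W : ℝ → ℝ,
      (∀ t ∈ Set.Ici (0:ℝ),
        HasDerivWithinAt X
          (-(X t) * ((d : ℝ) * X t^2 + Zt t^2 - 2*Zt t) - (A2 d / (d : ℝ)) * Yt t
            + (2 * A3 d q / (d : ℝ)) * W t^2) (Set.Ici 0) t ∧
        HasDerivWithinAt Yt
          (-2 * Yt t * ((d : ℝ) * X t^2 - X t + Zt t^2 - 2*Zt t + 1)) (Set.Ici 0) t ∧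
        HasDerivWithinAt Zt
          (-(Zt t) * ((d : ℝ) * X t^2 + Zt t^2 - 3*Zt t + 2) + (d : ℝ) * X t^2
            + A3 d q * W t^2) (Set.Ici 0) t ∧
        HasDerivWithinAt W
          (-(W t) * ((d : ℝ) * X t^2 - 2*X t + Zt t^2 - 3*Zt t + 2)) (Set.Ici 0) t) ∧
      (∀ t ≥ (0:ℝ), 0 < Yt t) ∧
      (∃ M : ℝ, ∀ t ≥ (0:ℝ),
        Real.exp (2*t) * (|X t| + |Yt t| + |Zt t| + |W t|) ≤ M) ∧
      Tendsto X atTop (𝓝 0) ∧ Tendsto Yt atTop (𝓝 0) ∧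
      Tendsto Zt atTop (𝓝 0) ∧ Tendsto W atTop (𝓝 0) ∧
      Tendsto (fun t => Zt t / Yt t) atTop (𝓝 α) ∧
      Tendsto (fun t => W t / Yt t) atTop (𝓝 β) := by
  have hd0 : (d : ℝ) ≠ 0 := by positivity
  set a : ℝ := A3 d q
  set c : ℝ := ((d : ℝ) + 2) / 2 with hc
  have hA2 : A2 d / (d : ℝ) = 2 * c := by
    rw [A2, hc]; field_simp
  -- The desingularised field in the variable `s = e^{-2t}`, where
  -- `(X, Ỹ, Z̃, W) = s • (v 0 + c * v 1, v 1, v 2, v 3)`.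
  let x : (Fin 4 → ℝ) → ℝ := fun v => v 0 + c * v 1
  let P : ℝ × (Fin 4 → ℝ) → ℝ := fun p => d * p.1 * x p.2 ^ 2 + p.1 * p.2 2 ^ 2 - 2 * p.2 2
  let H : ℝ × (Fin 4 → ℝ) → Fin 4 → ℝ := fun p =>
    ![x p.2 * P p / 2 - a / d * p.2 3 ^ 2 - c * (p.2 1 * (P p - x p.2)),
      p.2 1 * (P p - x p.2),
      (p.2 2 * (P p - p.2 2) - d * x p.2 ^ 2 - a * p.2 3 ^ 2) / 2,
      p.2 3 * (P p - 2 * x p.2 - p.2 2) / 2]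
  have hH : ContDiff ℝ 1 H := by
    refine contDiff_pi.2 fun i => ?_
    fin_cases i <;> simp only [H, P, x] <;> simp <;> fun_prop
  obtain ⟨T, hT, v, hv, hv0, hder⟩ :=
    exists_hasDerivAt_singular_of_contDiff ![1, 0, 0, 0] hH ![0, 1, α, β]
  have hvi : ∀ i, Continuous fun s => v s i := fun i => (continuous_apply i).comp hv
  have hpos : ∀ᶠ s in 𝓝 (0 : ℝ), 0 < v s 1 :=
    (hvi 1).continuousAt.eventually (lt_mem_nhds (by simp [hv0]))
  obtain ⟨ε, hε, hball⟩ := Metric.eventually_nhds_iff.1 hpos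
  obtain ⟨s₀, hs₀, hs₀lt⟩ := exists_between (lt_min hT hε)
  let σ : ℝ → ℝ := fun t => s₀ * Real.exp (-(2 * t))
  have hσpos : ∀ t, 0 < σ t := fun t => mul_pos hs₀ (Real.exp_pos _)
  have hσle : ∀ t, 0 ≤ t → σ t ≤ s₀ := fun t ht =>
    mul_le_of_le_one_right hs₀.le (Real.exp_le_one_iff.2 (by linarith))
  have hσder : ∀ t, HasDerivAt σ (-2 * σ t) t := fun t => by
    refine ((((hasDerivAt_id t).const_mul 2).neg.exp).const_mul s₀).congr_deriv ?_
    simp only [σ, id, Pi.neg_apply]; ring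
  have hσlim : Tendsto σ atTop (𝓝 0) := by
    have h : Tendsto (fun t : ℝ => 2 * t) atTop atTop :=
      tendsto_id.const_mul_atTop two_pos
    simpa using (Real.tendsto_exp_neg_atTop_nhds_zero.comp h).const_mul s₀
  have hvpos : ∀ t, 0 ≤ t → 0 < v (σ t) 1 := fun t ht => hball (by
    rw [Real.dist_eq, sub_zero, abs_of_pos (hσpos t)]
    exact (hσle t ht).trans_lt (hs₀lt.trans_le (min_le_right _ _)))
  have hvlim : ∀ i, Tendsto (fun t => v (σ t) i) atTop (𝓝 (![0, 1, α, β] i)) := fun i => by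
    rw [← hv0]
    exact ((hvi i).tendsto 0).comp hσlim
  have hvder : ∀ t, 0 ≤ t → ∀ i, HasDerivAt (fun t => v (σ t) i)
      ((H (σ t, v (σ t)) i - (![1, 0, 0, 0] i : ℕ) * (v (σ t) i - ![0, 1, α, β] i) / σ t)
        * (-2 * σ t)) t := fun t ht i =>
    (hder (σ t) ⟨hσpos t, (hσle t ht).trans_lt (hs₀lt.trans_le (min_le_left _ _))⟩ i).comp t
      (hσder t)
  refine ⟨fun t => σ t * x (v (σ t)), fun t => σ t * v (σ t) 1, fun t => σ t * v (σ t) 2,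
    fun t => σ t * v (σ t) 3, fun t ht => ⟨?_, ?_, ?_, ?_⟩,
    fun t ht => mul_pos (hσpos t) (hvpos t ht), ?_, ?_, ?_, ?_, ?_, ?_, ?_⟩
  · have h := (hσder t).mul ((hvder t ht 0).add ((hvder t ht 1).const_mul c))
    refine (h.congr_deriv ?_).hasDerivWithinAt
    have := (hσpos t).ne'
    rw [hA2]
    simp [H, P, x]
    field_simp
    ring
  · refine (((hσder t).mul (hvder t ht 1)).congr_deriv ?_).hasDerivWithinAt
    simp [H, P, x]
    ring
  · refine (((hσder t).mul (hvder t ht 2)).congr_deriv ?_).hasDerivWithinAt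
    simp [H, P, x]
    ring
  · refine (((hσder t).mul (hvder t ht 3)).congr_deriv ?_).hasDerivWithinAt
    simp [H, P, x]
    ring
  · have hcont : Continuous fun s =>
        s₀ * (|x (v s)| + |v s 1| + |v s 2| + |v s 3|) := by
      simp only [x]; fun_prop
    obtain ⟨M, hM⟩ := (isCompact_Icc (a := 0) (b := s₀)).bddAbove_image hcont.continuousOn
    refine ⟨M, fun t ht => ?_⟩
    refine le_trans (le_of_eq ?_) (hM ⟨σ t, ⟨(hσpos t).le, hσle t ht⟩, rfl⟩)
    have he : Real.exp (2 * t) * σ t = s₀ := by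
      simp only [σ, Real.exp_neg]
      field_simp
    simp only [abs_mul, abs_of_pos (hσpos t), ← mul_add, ← mul_assoc, he]
  · simpa using hσlim.mul ((hvlim 0).add ((hvlim 1).const_mul c))
  · simpa using hσlim.mul (hvlim 1)
  · simpa using hσlim.mul (hvlim 2)
  · simpa using hσlim.mul (hvlim 3)
  · have h := (hvlim 2).div (hvlim 1) (by simp)
    simp only [mul_div_mul_left _ _ (hσpos _).ne']
    simpa [Pi.div_def] using h
  · have h := (hvlim 3).div (hvlim 1) (by simp)
    simp only [mul_div_mul_left _ _ (hσpos _).ne']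
    simpa [Pi.div_def] using h
end

section
/- For every real number γ there exists a solution (X, Y, Z, W) of the system (★) defined on an interval containing (−∞, 0] such that: (1) Y(t) > 0 for all t; (2) e^{−2t}·(|X(t)| + |Z(t) − 1| + |W(t)|) remains bounded as t → −∞; (3) e^{−t}·|Y(t)| remains bounded as t → −∞; (4) lim_{t→−∞} W(t)/Y(t)² = 1; and (5) lim_{t→−∞} (1 − Z(t))/Y(t)² = γ. -/
open Filter Topology

/-- Local solvability, near `σ = 0`, of the integral equation of a singular (Briot–Bouquet type)
initial value problem. -/
theorem exists_singular_integral_solution {E : Type*} [NormedAddCommGroup E] [NormedSpace ℝ E]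
    [CompleteSpace E] {D : ℝ → E →L[ℝ] E} (hD : Continuous D)
    (hD1 : ∀ θ ∈ Set.Icc (0:ℝ) 1, ‖D θ‖ ≤ 1) {F : ℝ × E → E} (hF : ContDiff ℝ 1 F) (v₀ : E) :
    ∃ ε : ℝ, 0 < ε ∧ ∃ v : ℝ → E, Continuous v ∧ ∀ σ ∈ Set.Icc (0:ℝ) ε,
      v σ = v₀ + σ • ∫ θ in (0:ℝ)..1, D θ (F (σ * θ, v (σ * θ))) := by
  obtain ⟨K, T, hT, hK⟩ := (hF.contDiffAt (x := ((0:ℝ), v₀))).exists_lipschitzOnWith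
  obtain ⟨r, hr, hrT⟩ := Metric.nhds_basis_closedBall.mem_iff.1 hT
  replace hK := hK.mono hrT
  have hKn : (0:ℝ) ≤ K := K.2
  set M : ℝ := ‖F (0, v₀)‖ + K * r with hM
  have hM0 : 0 ≤ M := by positivity
  have hFM : ∀ x ∈ Metric.closedBall ((0:ℝ), v₀) r, ‖F x‖ ≤ M := by
    intro x hx
    have h1 := hK.dist_le_mul x hx _ (Metric.mem_closedBall_self hr.le)
    have h2 : dist x ((0:ℝ), v₀) ≤ r := hx
    have h3 : ‖F x‖ ≤ ‖F (0, v₀)‖ + dist (F x) (F (0, v₀)) := by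
      rw [dist_eq_norm]
      exact norm_le_norm_add_norm_sub' _ _
    nlinarith
  obtain ⟨ε, hε, hεr, hεM, hεK⟩ : ∃ ε : ℝ, 0 < ε ∧ ε ≤ r ∧ ε * M ≤ r ∧ ε * K ≤ 1 / 2 := by
    refine ⟨min r (min (r / (M + 1)) (1 / (2 * (K + 1)))), by positivity, min_le_left _ _, ?_, ?_⟩
    · have h : min r (min (r / (M + 1)) (1 / (2 * (K + 1)))) ≤ r / (M + 1) :=
        (min_le_right _ _).trans (min_le_left _ _)
      rw [le_div_iff₀ (by positivity)] at h
      have : 0 ≤ min r (min (r / (M + 1)) (1 / (2 * ((K:ℝ) + 1)))) := by positivity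
      nlinarith
    · have h : min r (min (r / (M + 1)) (1 / (2 * (K + 1)))) ≤ 1 / (2 * ((K:ℝ) + 1)) :=
        (min_le_right _ _).trans (min_le_right _ _)
      rw [le_div_iff₀ (by positivity)] at h
      have : 0 ≤ min r (min (r / (M + 1)) (1 / (2 * ((K:ℝ) + 1)))) := by positivity
      nlinarith
  have hFc := hF.continuous
  let ext : C(Set.Icc (0:ℝ) ε, E) → ℝ → E := fun v => Set.IccExtend hε.le v
  have hext : ∀ v, Continuous (ext v) := fun v => v.continuous.Icc_extend'
  let g : C(Set.Icc (0:ℝ) ε, E) → ℝ → ℝ → E := fun v σ θ => D θ (F (σ * θ, ext v (σ * θ)))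
  have hg : ∀ v, Continuous (Function.uncurry (g v)) := by
    intro v
    have := hext v
    simp only [g, Function.uncurry_def]
    fun_prop
  have hgi : ∀ v σ, IntervalIntegrable (g v σ) MeasureTheory.volume 0 1 := by
    intro v σ
    have := hg v
    exact Continuous.intervalIntegrable (by fun_prop) _ _
  let Φ : C(Set.Icc (0:ℝ) ε, E) → C(Set.Icc (0:ℝ) ε, E) := fun v =>
    ⟨fun σ => v₀ + (σ:ℝ) • ∫ θ in (0:ℝ)..1, g v σ θ, by
      have : Continuous fun σ : ℝ => ∫ θ in (0:ℝ)..1, g v σ θ :=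
        intervalIntegral.continuous_parametric_intervalIntegral_of_continuous' (hg v) 0 1
      fun_prop⟩
  have hmem : ∀ v ∈ Metric.closedBall (ContinuousMap.const (Set.Icc (0:ℝ) ε) v₀) r,
      ∀ σ ∈ Set.Icc (0:ℝ) ε, ∀ θ ∈ Set.Icc (0:ℝ) 1,
        (σ * θ, ext v (σ * θ)) ∈ Metric.closedBall ((0:ℝ), v₀) r := by
    intro v hv σ hσ θ hθ
    have h0 : 0 ≤ σ * θ := mul_nonneg hσ.1 hθ.1
    rw [← closedBall_prod_same]
    refine ⟨?_, ?_⟩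
    · rw [Metric.mem_closedBall, Real.dist_eq, sub_zero, abs_of_nonneg h0]
      nlinarith [hσ.1, hσ.2, hθ.1, hθ.2]
    · exact (ContinuousMap.dist_le hr.le).1 hv _
  have huI : ∀ θ ∈ Set.uIoc (0:ℝ) 1, θ ∈ Set.Icc (0:ℝ) 1 := by
    intro θ hθ
    rw [Set.uIoc_of_le zero_le_one] at hθ
    exact ⟨hθ.1.le, hθ.2⟩
  have hmaps : Set.MapsTo Φ (Metric.closedBall (ContinuousMap.const (Set.Icc (0:ℝ) ε) v₀) r)
      (Metric.closedBall (ContinuousMap.const (Set.Icc (0:ℝ) ε) v₀) r) := by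
    intro v hv
    refine (ContinuousMap.dist_le hr.le).2 fun σ => ?_
    have h1 : ‖∫ θ in (0:ℝ)..1, g v σ θ‖ ≤ M * |1 - 0| := by
      refine intervalIntegral.norm_integral_le_of_norm_le_const fun θ hθ => ?_
      have hθ' := huI θ hθ
      refine ((D θ).le_opNorm _).trans ?_
      have := hFM _ (hmem v hv σ σ.2 θ hθ')
      have := hD1 θ hθ'
      nlinarith [norm_nonneg (D θ), norm_nonneg (F (σ * θ, ext v (σ * θ)))]
    have h2 : dist (Φ v σ) v₀ = σ * ‖∫ θ in (0:ℝ)..1, g v σ θ‖ := by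
      simp [Φ, norm_smul, abs_of_nonneg σ.2.1]
    have h3 := σ.2.1
    have h4 := σ.2.2
    simp only [sub_zero, abs_one, mul_one] at h1
    rw [ContinuousMap.const_apply, h2]
    exact (mul_le_mul h4 h1 (norm_nonneg _) hε.le).trans hεM
  have hcontr : ContractingWith (1 / 2) (hmaps.restrict Φ _ _) := by
    refine ⟨by rw [← NNReal.coe_lt_coe]; norm_num, LipschitzWith.of_dist_le_mul ?_⟩
    rintro ⟨v, hv⟩ ⟨w, hw⟩
    change dist (Φ v) (Φ w) ≤ _ * dist v w
    refine (ContinuousMap.dist_le (by positivity)).2 fun σ => ?_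
    have h1 : ‖∫ θ in (0:ℝ)..1, (g v σ θ - g w σ θ)‖ ≤ K * dist v w * |1 - 0| := by
      refine intervalIntegral.norm_integral_le_of_norm_le_const fun θ hθ => ?_
      have hθ' := huI θ hθ
      simp only [g]
      rw [← map_sub]
      refine ((D θ).le_opNorm _).trans ?_
      have h2 := hK.dist_le_mul _ (hmem v hv σ σ.2 θ hθ') _ (hmem w hw σ σ.2 θ hθ')
      rw [dist_eq_norm, Prod.dist_eq] at h2
      simp only [dist_self] at h2
      rw [max_eq_right dist_nonneg] at h2
      have h3 : dist (ext v (σ * θ)) (ext w (σ * θ)) ≤ dist v w :=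
        ContinuousMap.dist_apply_le_dist _
      have := hD1 θ hθ'
      have h4 := mul_le_mul_of_nonneg_left h3 hKn
      have h5 := mul_le_mul this (h2.trans h4) (norm_nonneg _) zero_le_one
      simpa using h5
    have h2 : dist (Φ v σ) (Φ w σ) = σ * ‖∫ θ in (0:ℝ)..1, (g v σ θ - g w σ θ)‖ := by
      rw [intervalIntegral.integral_sub (hgi v σ) (hgi w σ), dist_eq_norm]
      simp only [Φ, ContinuousMap.coe_mk]
      rw [add_sub_add_left_eq_sub, ← smul_sub, norm_smul, Real.norm_of_nonneg σ.2.1]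
    simp only [sub_zero, abs_one, mul_one] at h1
    rw [h2]
    refine (mul_le_mul σ.2.2 h1 (norm_nonneg _) hε.le).trans ?_
    rw [← mul_assoc]
    exact mul_le_mul_of_nonneg_right (by simpa using hεK) dist_nonneg
  obtain ⟨v, -, hv, -⟩ := hcontr.exists_fixedPoint' Metric.isClosed_closedBall.isComplete hmaps
    (Metric.mem_closedBall_self hr.le) (edist_ne_top _ _)
  refine ⟨ε, hε, ext v, hext v, fun σ hσ => ?_⟩
  have h := DFunLike.congr_fun hv ⟨σ, hσ⟩
  rw [show ext v σ = v ⟨σ, hσ⟩ from Set.IccExtend_of_mem _ _ hσ, ← h]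
  rfl

/-- Local solvability of `(σ p)' = σ P(σ, p, u)`, `u' = Q(σ, p, u)` with `p(0) = 0`,
`u(0) = u₀`. -/
theorem exists_singular_ode_solution {E : Type*} [NormedAddCommGroup E] [NormedSpace ℝ E]
    [CompleteSpace E] {P : ℝ × ℝ × E → ℝ} {Q : ℝ × ℝ × E → E} (hP : ContDiff ℝ 1 P)
    (hQ : ContDiff ℝ 1 Q) (u₀ : E) :
    ∃ ε : ℝ, 0 < ε ∧ ∃ (p : ℝ → ℝ) (u : ℝ → E), ContinuousWithinAt p (Set.Ioi 0) 0 ∧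
      ContinuousWithinAt u (Set.Ioi 0) 0 ∧ p 0 = 0 ∧ u 0 = u₀ ∧ ∀ σ ∈ Set.Ioc (0:ℝ) ε,
        HasDerivAt (fun σ => σ * p σ) (σ * P (σ, p σ, u σ)) σ ∧
        HasDerivAt u (Q (σ, p σ, u σ)) σ := by
  let D : ℝ → (ℝ × E) →L[ℝ] (ℝ × E) := fun θ =>
    ContinuousLinearMap.inr ℝ ℝ E ∘L ContinuousLinearMap.snd ℝ ℝ E +
      θ • (ContinuousLinearMap.inl ℝ ℝ E ∘L ContinuousLinearMap.fst ℝ ℝ E)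
  have hDapp : ∀ θ x, D θ x = (θ * x.1, x.2) := by
    intro θ x
    simp [D]
  have hD : Continuous D := by
    simp only [D]
    fun_prop
  have hD1 : ∀ θ ∈ Set.Icc (0:ℝ) 1, ‖D θ‖ ≤ 1 := by
    intro θ hθ
    refine ContinuousLinearMap.opNorm_le_bound _ zero_le_one fun x => ?_
    rw [hDapp, one_mul, Prod.norm_def, Prod.norm_def]
    refine max_le_max ?_ le_rfl
    rw [norm_mul, Real.norm_of_nonneg hθ.1]
    exact mul_le_of_le_one_left (norm_nonneg _) hθ.2
  obtain ⟨ε, hε, v, hvc, hv⟩ := exists_singular_integral_solution hD hD1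
    (hP.prodMk hQ) ((0:ℝ), u₀)
  have hPc := hP.continuous
  have hQc := hQ.continuous
  set a : ℝ → ℝ := fun s => P (s, v s) with ha
  set b : ℝ → E := fun s => Q (s, v s) with hb
  have hac : Continuous a := by fun_prop
  have hbc : Continuous b := by fun_prop
  have hint : ∀ σ, (∫ θ in (0:ℝ)..1, D θ (P (σ * θ, v (σ * θ)), Q (σ * θ, v (σ * θ)))) =
      (∫ θ in (0:ℝ)..1, θ * a (σ * θ), ∫ θ in (0:ℝ)..1, b (σ * θ)) := by
    intro σ
    have hc : Continuous fun θ => D θ (P (σ * θ, v (σ * θ)), Q (σ * θ, v (σ * θ))) := by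
      fun_prop
    have hi := hc.intervalIntegrable (μ := MeasureTheory.volume) 0 1
    refine Prod.ext ?_ ?_
    · have := (ContinuousLinearMap.fst ℝ ℝ E).intervalIntegral_comp_comm hi
      simp only [ContinuousLinearMap.coe_fst', hDapp] at this
      simp only [hDapp]
      exact this.symm
    · have := (ContinuousLinearMap.snd ℝ ℝ E).intervalIntegral_comp_comm hi
      simp only [ContinuousLinearMap.coe_snd', hDapp] at this
      simp only [hDapp]
      exact this.symm
  let p : ℝ → ℝ := fun σ => σ * ∫ θ in (0:ℝ)..1, θ * a (σ * θ)
  let u : ℝ → E := fun σ => u₀ + σ • ∫ θ in (0:ℝ)..1, b (σ * θ)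
  have hpu : ∀ σ ∈ Set.Icc (0:ℝ) ε, v σ = (p σ, u σ) := by
    intro σ hσ
    rw [hv σ hσ, hint]
    simp [p, u]
  have hpc : Continuous p := by
    have : Continuous fun σ : ℝ => ∫ θ in (0:ℝ)..1, θ * a (σ * θ) :=
      intervalIntegral.continuous_parametric_intervalIntegral_of_continuous'
        (by simp only [Function.uncurry_def]; fun_prop) 0 1
    fun_prop
  have huc : Continuous u := by
    have : Continuous fun σ : ℝ => ∫ θ in (0:ℝ)..1, b (σ * θ) :=
      intervalIntegral.continuous_parametric_intervalIntegral_of_continuous'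
        (by simp only [Function.uncurry_def]; fun_prop) 0 1
    fun_prop
  have hpi : (fun σ => σ * p σ) = fun σ => ∫ s in (0:ℝ)..σ, s * a s := by
    funext σ
    have := intervalIntegral.smul_integral_comp_mul_left (fun s => s * a s) (a := 0) (b := 1) σ
    simp only [mul_zero, mul_one, smul_eq_mul] at this
    rw [← this]
    simp only [p]
    congr 1
    rw [← intervalIntegral.integral_const_mul]
    simp only [mul_assoc]
  have hui : u = fun σ => u₀ + ∫ s in (0:ℝ)..σ, b s := by
    funext σ
    simp only [u]
    rw [intervalIntegral.smul_integral_comp_mul_left, mul_zero, mul_one]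
  refine ⟨ε, hε, p, u, hpc.continuousWithinAt, huc.continuousWithinAt, by simp [p], by simp [u],
    fun σ hσ => ?_⟩
  have hσ' := hpu σ ⟨hσ.1.le, hσ.2⟩
  have hsa : Continuous fun s => s * a s := by fun_prop
  have h1 := (intervalIntegral.integral_hasDerivAt_right (hsa.intervalIntegrable 0 σ)
    (hsa.stronglyMeasurableAtFilter _ _) hsa.continuousAt)
  have h2 := (intervalIntegral.integral_hasDerivAt_right (hbc.intervalIntegrable 0 σ)
    (hbc.stronglyMeasurableAtFilter _ _) hbc.continuousAt).const_add u₀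
  rw [← hpi] at h1
  rw [← hui] at h2
  simp only [ha, hb, hσ'] at h1 h2
  exact ⟨h1, h2⟩

/-- For every `γ ∈ ℝ` there is a solution `(X,Y,Z,W)` of the system (★) on an interval
containing `(−∞, 0]` with `Y > 0`, with `e^{−2t}(|X| + |Z−1| + |W|)` and `e^{−t}|Y|`
bounded as `t → −∞`, and with `W/Y² → 1` and `(1−Z)/Y² → γ` as `t → −∞`. -/
theorem stmt6 (d : ℕ) (hd : 2 ≤ d) (q : ℝ) (γ : ℝ) :
    ∃ X Y Z W : ℝ → ℝ,
      (∀ t ∈ Set.Iic (0:ℝ),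
        HasDerivWithinAt X
          (X t * ((d : ℝ) * X t^2 + Z t^2 - 1) + (A2 d / (d : ℝ)) * Y t^2
            - (2 * A3 d q / (d : ℝ)) * W t^2) (Set.Iic 0) t ∧
        HasDerivWithinAt Y (Y t * ((d : ℝ) * X t^2 + Z t^2 - X t)) (Set.Iic 0) t ∧
        HasDerivWithinAt Z
          (Z t * ((d : ℝ) * X t^2 + Z t^2 - 1) + A3 d q * W t^2) (Set.Iic 0) t ∧
        HasDerivWithinAt W
          (W t * ((d : ℝ) * X t^2 + Z t^2 - 2*X t + Z t)) (Set.Iic 0) t) ∧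
      (∀ t ≤ (0:ℝ), 0 < Y t) ∧
      (∃ M : ℝ, ∀ᶠ t in atBot,
        Real.exp (-2*t) * (|X t| + |Z t - 1| + |W t|) ≤ M) ∧
      (∃ M : ℝ, ∀ᶠ t in atBot, Real.exp (-t) * |Y t| ≤ M) ∧
      Tendsto (fun t => W t / Y t^2) atBot (𝓝 1) ∧
      Tendsto (fun t => (1 - Z t) / Y t^2) atBot (𝓝 γ) := by
  have hd0 : (d : ℝ) ≠ 0 := by positivity
  set δ : ℝ := (d : ℝ) with hδ
  set a : ℝ := A3 d q with ha
  have hA2 : A2 d / δ = δ + 2 := by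
    rw [A2, mul_div_cancel_left₀ _ hd0]
  set c : ℝ := (δ + 2) / 2 with hc
  -- The unknowns are `X = σ x`, `Y² = σ y²`, `Z = 1 + σ ζ`, `W = σ w`, `x = p + c y²`.
  let x : ℝ × ℝ × ℝ × ℝ × ℝ → ℝ := fun v => v.2.1 + c * v.2.2.1 ^ 2
  let G : ℝ × ℝ × ℝ × ℝ × ℝ → ℝ := fun v =>
    δ * v.1 * x v ^ 2 + 2 * v.2.2.2.1 + v.1 * v.2.2.2.1 ^ 2
  let P : ℝ × ℝ × ℝ × ℝ × ℝ → ℝ := fun v =>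
    1 / 2 * (x v * G v - 2 * a / δ * v.2.2.2.2 ^ 2) - c * v.2.2.1 ^ 2 * (G v - x v)
  let Q : ℝ × ℝ × ℝ × ℝ × ℝ → ℝ × ℝ × ℝ := fun v =>
    (1 / 2 * v.2.2.1 * (G v - x v),
      1 / 2 * (δ * x v ^ 2 + v.2.2.2.1 ^ 2 + v.2.2.2.1 * G v + a * v.2.2.2.2 ^ 2),
      1 / 2 * v.2.2.2.2 * (G v - 2 * x v + v.2.2.2.1))
  have hP : ContDiff ℝ 1 P := by
    simp only [P, G, x]
    fun_prop
  have hQ : ContDiff ℝ 1 Q := by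
    simp only [Q, G, x]
    fun_prop
  obtain ⟨ε₀, hε₀, p, u, hpc, huc, hp0, hu0, hode⟩ :=
    exists_singular_ode_solution hP hQ ((1 : ℝ), -γ, (1 : ℝ))
  have hyt : Tendsto (fun σ => (u σ).1) (𝓝[>] 0) (𝓝 1) := by
    have := huc.fst
    rwa [ContinuousWithinAt, hu0] at this
  have hζt : Tendsto (fun σ => (u σ).2.1) (𝓝[>] 0) (𝓝 (-γ)) := by
    have := huc.snd.fst
    rwa [ContinuousWithinAt, hu0] at this
  have hwt : Tendsto (fun σ => (u σ).2.2) (𝓝[>] 0) (𝓝 1) := by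
    have := huc.snd.snd
    rwa [ContinuousWithinAt, hu0] at this
  obtain ⟨s, hs, hsε, hspos⟩ : ∃ s : ℝ, 0 < s ∧ s ^ 2 ≤ ε₀ ∧
      ∀ σ ∈ Set.Ioc 0 (s ^ 2), 0 < (u σ).1 := by
    obtain ⟨η, hη, hsub⟩ := mem_nhdsGT_iff_exists_Ioc_subset.1
      (hyt.eventually (lt_mem_nhds one_pos))
    have hm : 0 < min ε₀ η := lt_min hε₀ hη
    refine ⟨√(min ε₀ η), Real.sqrt_pos.2 hm, ?_, fun σ hσ => hsub ?_⟩
    · rw [Real.sq_sqrt hm.le]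
      exact min_le_left _ _
    · rw [Real.sq_sqrt hm.le] at hσ
      exact ⟨hσ.1, hσ.2.trans (min_le_right _ _)⟩
  let e : ℝ → ℝ := fun t => s * Real.exp t
  have he : ∀ t, 0 < e t := fun t => mul_pos hs (Real.exp_pos t)
  have hed : ∀ t, HasDerivAt e (e t) t := fun t => (Real.hasDerivAt_exp t).const_mul s
  have hσd : ∀ t, HasDerivAt (fun t => e t ^ 2) (2 * e t ^ 2) t := fun t =>
    ((hed t).pow 2).congr_deriv (by ring)
  have hσI : ∀ t ≤ 0, e t ^ 2 ∈ Set.Ioc 0 (s ^ 2) := by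
    intro t ht
    refine ⟨pow_pos (he t) 2, pow_le_pow_left₀ (he t).le ?_ 2⟩
    exact mul_le_of_le_one_right hs.le (Real.exp_le_one_iff.2 ht)
  have hσt : Tendsto (fun t => e t ^ 2) atBot (𝓝[>] 0) := by
    refine tendsto_nhdsWithin_iff.2 ⟨?_, Eventually.of_forall fun t => pow_pos (he t) 2⟩
    have := (Real.tendsto_exp_atBot.const_mul s).pow 2
    simpa using this
  let y : ℝ → ℝ := fun t => (u (e t ^ 2)).1
  let ζ : ℝ → ℝ := fun t => (u (e t ^ 2)).2.1
  let w : ℝ → ℝ := fun t => (u (e t ^ 2)).2.2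
  let ξ : ℝ → ℝ := fun t => p (e t ^ 2) + c * y t ^ 2
  have hyT : Tendsto y atBot (𝓝 1) := hyt.comp hσt
  have hζT : Tendsto ζ atBot (𝓝 (-γ)) := hζt.comp hσt
  have hwT : Tendsto w atBot (𝓝 1) := hwt.comp hσt
  have hξT : Tendsto ξ atBot (𝓝 c) := by
    have h := (hpc.tendsto.comp hσt).add ((hyT.pow 2).const_mul c)
    rw [hp0] at h
    simpa using h
  have hexp : ∀ t, Real.exp (-2 * t) * e t ^ 2 = s ^ 2 := by
    intro t
    simp only [e]
    rw [mul_pow, ← Real.exp_nat_mul, mul_left_comm, ← Real.exp_add]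
    simp
  have hexp1 : ∀ t, Real.exp (-t) * e t = s := by
    intro t
    simp only [e]
    rw [mul_left_comm, ← Real.exp_add]
    simp
  refine ⟨fun t => e t ^ 2 * ξ t, fun t => e t * y t, fun t => 1 + e t ^ 2 * ζ t,
    fun t => e t ^ 2 * w t, ?_, fun t ht => mul_pos (he t) (hspos _ (hσI t ht)),
    ⟨s ^ 2 * (|c| + |-γ| + |1|) + 1, ?_⟩, ⟨s * |1| + 1, ?_⟩, ?_, ?_⟩
  · intro t ht
    have hmem := hσI t ht
    obtain ⟨hpd, hud⟩ := hode _ ⟨hmem.1, hmem.2.trans hsε⟩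
    have hpd' := hpd.comp t (hσd t)
    have hud' := hud.scomp t (hσd t)
    have hyd : HasDerivAt y _ t := hud'.fst
    have hζd : HasDerivAt ζ _ t := hud'.snd.fst
    have hwd : HasDerivAt w _ t := hud'.snd.snd
    have hξd : HasDerivAt (fun t => e t ^ 2 * ξ t) _ t :=
      (hpd'.add (((hσd t).mul (hyd.pow 2)).const_mul c)).congr_of_eventuallyEq
        (Eventually.of_forall fun t => by simp [ξ]; ring)
    refine ⟨(hξd.congr_deriv ?_).hasDerivWithinAt,
      (((hed t).mul hyd).congr_deriv ?_).hasDerivWithinAt,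
      ((((hσd t).mul hζd).const_add 1).congr_deriv ?_).hasDerivWithinAt,
      (((hσd t).mul hwd).congr_deriv ?_).hasDerivWithinAt⟩
    · rw [hA2]
      simp [P, Q, G, x, ξ, y, ζ, w, hc]
      field_simp
      ring
    · simp [Q, G, x, ξ, y, ζ, hc]
      ring
    · simp [Q, G, x, ξ, y, ζ, w, hc]
      ring
    · simp [Q, G, x, ξ, y, ζ, w, hc]
      ring
  · have h : Tendsto (fun t => s ^ 2 * (|ξ t| + |ζ t| + |w t|)) atBot
        (𝓝 (s ^ 2 * (|c| + |-γ| + |1|))) :=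
      ((hξT.abs.add hζT.abs).add hwT.abs).const_mul _
    filter_upwards [h.eventually (gt_mem_nhds (lt_add_one _))] with t ht
    have h0 : |e t ^ 2| = e t ^ 2 := abs_of_pos (pow_pos (he t) 2)
    rw [add_sub_cancel_left, abs_mul, abs_mul, abs_mul, h0, ← mul_add, ← mul_add, ← mul_assoc,
      hexp]
    exact ht.le
  · filter_upwards [(hyT.abs.const_mul s).eventually (gt_mem_nhds (lt_add_one _))] with t ht
    rw [abs_mul, abs_of_pos (he t), ← mul_assoc, hexp1]
    exact ht.le
  · have h := hwT.div (hyT.pow 2) (by norm_num)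
    simp only [one_pow, div_one] at h
    refine h.congr fun t => ?_
    rw [mul_pow, mul_div_mul_left _ _ (pow_pos (he t) 2).ne']
    rfl
  · have h := hζT.neg.div (hyT.pow 2) (by norm_num)
    simp only [one_pow, div_one, neg_neg] at h
    refine h.congr fun t => ?_
    rw [mul_pow, sub_add_cancel_left, ← mul_neg, mul_div_mul_left _ _ (pow_pos (he t) 2).ne']
    rfl
end

section
/- (Kellogg) Let B be a bounded convex open subset of a real Banach space 𝕍, and let T : closure(B) → closure(B) be a continuous map whose image is precompact, and which is continuously Fréchet differentiable on B. Suppose that: (a) for each v ∈ B, 1 is not an eigenvalue of the Fréchet derivative DT_v, i.e. the only h ∈ 𝕍 with DT_v(h) = h is h = 0; and (b) for each v in the boundary of B, T(v) ≠ v. Then T has exactly one fixed point in closure(B). -/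
open Filter Topology

open MeasureTheory Set

section

theorem det_eq_sum_det_one_add_smul {n : ℕ} (hn : 0 < n) {s₀ : ℝ} (hs₀ : 0 < s₀) :
    ∃ c v : ℕ → ℝ, (∀ j, 0 < v j ∧ v j ≤ s₀) ∧ ∀ A : (Fin n → ℝ) →L[ℝ] (Fin n → ℝ),
      A.det = ∑ j ∈ Finset.range (n + 1), c j * ((1 + v j • A).det - 1) := by
  classical
  set v : ℕ → ℝ := fun j => s₀ / (j + 1) with hv
  have hvinj : Set.InjOn v (Finset.range (n + 1)) := by
    intro i _ j _ h
    simp only [hv] at h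
    have hi : (0 : ℝ) < i + 1 := by positivity
    have hj : (0 : ℝ) < j + 1 := by positivity
    field_simp at h
    exact_mod_cast (by linarith : (i : ℝ) = j)
  set c : ℕ → ℝ := fun j => (∏ k ∈ (Finset.range (n + 1)).erase j, (v j - v k))⁻¹ with hc
  have key : ∀ P : Polynomial ℝ, P.natDegree ≤ n →
      P.coeff n = ∑ j ∈ Finset.range (n + 1), c j * P.eval (v j) := by
    intro P hP
    have h := Lagrange.coeff_eq_sum hvinj (P := P)
      (by rw [Finset.card_range]; exact Polynomial.degree_lt_iff_coeff_zero _ _ |>.2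
            fun m hm => Polynomial.coeff_eq_zero_of_natDegree_lt (by lia))
    rw [Finset.card_range, Nat.add_sub_cancel] at h
    rw [h]
    exact Finset.sum_congr rfl fun j _ => by rw [hc, div_eq_inv_mul]
  refine ⟨c, v, fun j => ⟨by positivity, ?_⟩, fun A => ?_⟩
  · exact div_le_self hs₀.le (by linarith [(Nat.cast_nonneg j : (0 : ℝ) ≤ j)])
  · have h1 : ∑ j ∈ Finset.range (n + 1), c j = 0 := by
      have := key 1 (by simp)
      simpa [Polynomial.coeff_one, hn.ne'] using this.symm
    set M := LinearMap.toMatrix' (A : (Fin n → ℝ) →ₗ[ℝ] (Fin n → ℝ)) with hM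
    have h2 := key _ ((Polynomial.natDegree_det_X_add_C_le M
      (1 : Matrix (Fin n) (Fin n) ℝ)).trans_eq (Fintype.card_fin n))
    have h3 := Polynomial.coeff_det_X_add_C_card M (1 : Matrix (Fin n) (Fin n) ℝ)
    rw [Fintype.card_fin] at h3
    replace h2 := h3.symm.trans h2
    simp only [mul_sub, mul_one, Finset.sum_sub_distrib, h1, sub_zero]
    have h4 : A.det = M.det := by rw [hM, LinearMap.det_toMatrix']
    rw [h4, h2]
    refine Finset.sum_congr rfl fun j _ => ?_
    congr 1
    have h5 : (1 + v j • A).det = (1 + v j • M).det := by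
      have : 1 + v j • M = LinearMap.toMatrix' ((1 + v j • A : (Fin n → ℝ) →L[ℝ] (Fin n → ℝ)) :
          (Fin n → ℝ) →ₗ[ℝ] (Fin n → ℝ)) := by
        simp [hM, LinearMap.toMatrix'_one]
      rw [this, LinearMap.det_toMatrix']
    rw [h5, ← Polynomial.coe_evalRingHom, RingHom.map_det]
    congr 1
    ext i k
    simp [Matrix.one_apply, add_comm]
    split_ifs <;> simp [mul_comm]

variable {n : ℕ}

theorem integral_det_one_add_smul_sub_one {E : Type*} [NormedAddCommGroup E] [NormedSpace ℝ E]
    [FiniteDimensional ℝ E] [MeasurableSpace E] [BorelSpace E] (μ : Measure E) [μ.IsAddHaarMeasure]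
    {G : E → E} (hG : ContDiff ℝ 1 G) (hGc : HasCompactSupport G) :
    ∃ s₀ : ℝ, 0 < s₀ ∧ ∀ s : ℝ, 0 < s → s ≤ s₀ →
      ∫ x, ((1 + s • fderiv ℝ G x).det - 1) ∂μ = 0 := by
  obtain ⟨C, hC⟩ := hG.lipschitzWith_of_hasCompactSupport hGc (by norm_num)
  have hdet1 : (1 : E →L[ℝ] E).det = 1 := LinearMap.det_id
  have hdet : ∀ᶠ A : E →L[ℝ] E in 𝓝 0, 0 < (1 + A).det := by
    have hcont : Continuous fun A : E →L[ℝ] E => (1 + A).det :=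
      ContinuousLinearMap.continuous_det.comp (continuous_const.add continuous_id)
    refine hcont.continuousAt.eventually (lt_mem_nhds ?_)
    beta_reduce
    rw [add_zero, hdet1]
    exact one_pos
  obtain ⟨ε, hε, hdet⟩ := Metric.eventually_nhds_iff_ball.1 hdet
  refine ⟨min (ε / (2 * (C + 1))) (1 / (2 * (C + 1))), by positivity, fun s hs hss => ?_⟩
  have hs1 : s * C < ε := by
    have h := hss.trans (min_le_left _ _)
    rw [le_div_iff₀ (by positivity)] at h
    nlinarith [C.2]
  have hs2 : s * C < 1 := by
    have h := hss.trans (min_le_right _ _)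
    rw [le_div_iff₀ (by positivity)] at h
    nlinarith [C.2]
  set f : E → E := fun x => x + s • G x with hf
  set f' : E → E →L[ℝ] E := fun x => 1 + s • fderiv ℝ G x with hf'
  have hderiv : ∀ x, HasFDerivAt f (f' x) x := fun x =>
    (hasFDerivAt_id x).add (((hG.differentiable one_ne_zero) x).hasFDerivAt.const_smul s)
  have hpos : ∀ x, 0 < (f' x).det := fun x => by
    refine hdet _ ?_
    rw [mem_ball_zero_iff, norm_smul, Real.norm_of_nonneg hs.le]
    exact (mul_le_mul_of_nonneg_left (norm_fderiv_le_of_lipschitz ℝ hC) hs.le).trans_lt hs1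
  have happ : ApproximatesLinearOn f (ContinuousLinearEquiv.refl ℝ E : E →L[ℝ] E) univ
      (s.toNNReal * C) := by
    intro x _ y _
    have : f x - f y - (x - y) = s • (G x - G y) := by simp [hf, smul_sub]; abel
    simp only [ContinuousLinearEquiv.coe_refl, ContinuousLinearMap.id_apply, this]
    rw [norm_smul, Real.norm_of_nonneg hs.le, NNReal.coe_mul, mul_assoc, Real.coe_toNNReal _ hs.le]
    exact mul_le_mul_of_nonneg_left (by simpa [dist_eq_norm] using hC.dist_le_mul x y) hs.le
  have hc : Subsingleton E ∨ s.toNNReal * C <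
      ‖((ContinuousLinearEquiv.refl ℝ E).symm : E →L[ℝ] E)‖₊⁻¹ := by
    rcases subsingleton_or_nontrivial E with h | h
    · exact Or.inl h
    · right
      have : ‖((ContinuousLinearEquiv.refl ℝ E).symm : E →L[ℝ] E)‖₊ = 1 := by
        ext; simp
      rw [this, inv_one, ← NNReal.coe_lt_coe, NNReal.coe_mul, Real.coe_toNNReal _ hs.le]
      exact hs2
  have hinj : Function.Injective f := fun x y h =>
    (happ.injOn hc) (mem_univ _) (mem_univ _) h
  have hsurj : Function.Surjective f := by
    have := happ.surjective (hc)
    exact this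
  set S := tsupport G
  have himg : f '' S = S := by
    have hid : ∀ x ∉ S, f x = x := fun x hx => by
      simp [hf, image_eq_zero_of_notMem_tsupport hx]
    apply Subset.antisymm
    · rintro _ ⟨x, hx, rfl⟩
      by_contra h
      exact h (by rwa [hinj (hid _ h)])
    · intro y hy
      obtain ⟨x, rfl⟩ := hsurj y
      by_cases hx : x ∈ S
      · exact ⟨x, hx, rfl⟩
      · exact absurd (by rwa [hid x hx] at hy) hx
  have hScomp : IsCompact S := hGc
  have hcv := integral_image_eq_integral_abs_det_fderiv_smul μ hScomp.measurableSet
    (fun x _ => (hderiv x).hasFDerivWithinAt) hinj.injOn (fun _ => (1 : ℝ))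
  rw [himg] at hcv
  simp only [smul_eq_mul, mul_one, abs_of_pos (hpos _)] at hcv
  have hcf : Continuous fun x => (f' x).det :=
    ContinuousLinearMap.continuous_det.comp
      (continuous_const.add ((hG.continuous_fderiv one_ne_zero).const_smul s))
  rw [← setIntegral_eq_integral_of_forall_compl_eq_zero (s := S), integral_sub, hcv, sub_self]
  · exact hcf.continuousOn.integrableOn_compact hScomp
  · exact continuousOn_const.integrableOn_compact hScomp
  · intro x hx
    have : fderiv ℝ G x = 0 :=
      image_eq_zero_of_notMem_tsupport fun h => hx (tsupport_fderiv_subset ℝ h)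
    simp [this, hdet1]

theorem integral_det_fderiv_eq_zero (hn : 0 < n) {G : (Fin n → ℝ) → (Fin n → ℝ)}
    (hG : ContDiff ℝ 1 G) (hGc : HasCompactSupport G) : ∫ x, (fderiv ℝ G x).det = 0 := by
  obtain ⟨s₀, hs₀, h⟩ := integral_det_one_add_smul_sub_one volume hG hGc
  obtain ⟨c, v, hv, hsum⟩ := det_eq_sum_det_one_add_smul hn hs₀
  rw [show (fun x => (fderiv ℝ G x).det) = fun x => ∑ j ∈ Finset.range (n + 1),
    c j * ((1 + v j • fderiv ℝ G x).det - 1) from funext fun x => hsum _, integral_finsetSum]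
  · exact Finset.sum_eq_zero fun j _ => by
      rw [integral_const_mul, h _ (hv j).1 (hv j).2, mul_zero]
  · intro j _
    refine Integrable.const_mul (Continuous.integrable_of_hasCompactSupport ?_ ?_) _
    · have hGd := hG.continuous_fderiv one_ne_zero
      exact (ContinuousLinearMap.continuous_det.comp
        (continuous_const.add (hGd.const_smul (v j)))).sub continuous_const
    · refine (hGc.fderiv ℝ).mono fun x hx => ?_
      contrapose! hx
      have hdet1 : (1 : (Fin n → ℝ) →L[ℝ] (Fin n → ℝ)).det = 1 := LinearMap.det_id
      simp [Function.notMem_support.1 hx, hdet1]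

theorem exists_contDiff_cutoff {E : Type*} [NormedAddCommGroup E] [NormedSpace ℝ E]
    [FiniteDimensional ℝ E] {K U : Set E} (hK : IsClosed K) (hU : IsOpen U) (hKU : K ⊆ U) :
    ∃ χ : E → ℝ, ContDiff ℝ 1 χ ∧ (∀ᶠ x in 𝓝ˢ Uᶜ, χ x = 0) ∧ (∀ᶠ x in 𝓝ˢ K, χ x = 1) ∧
      ∀ x, χ x ∈ Icc (0 : ℝ) 1 := by
  obtain ⟨χ, h0, h1, h⟩ := exists_contMDiffMap_zero_one_nhds_of_isClosed (n := 1)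
    (modelWithCornersSelf ℝ E) hU.isClosed_compl hK
    (disjoint_compl_left_iff_subset.2 hKU)
  exact ⟨χ, χ.contMDiff.contDiff, h0, h1, h⟩

theorem setIntegral_det_fderiv_congr (hn : 0 < n) {g g₁ : (Fin n → ℝ) → (Fin n → ℝ)}
    (hg : ContDiff ℝ 1 g) (hg₁ : ContDiff ℝ 1 g₁) {K U : Set (Fin n → ℝ)} (hK : IsClosed K)
    (hU : IsOpen U) (hUb : Bornology.IsBounded U) (hKU : K ⊆ U) (h : ∀ x ∉ K, g x = g₁ x) :
    ∫ x in U, (fderiv ℝ g x).det = ∫ x in U, (fderiv ℝ g₁ x).det := by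
  obtain ⟨R, hR⟩ := hUb.closure.subset_ball 0
  obtain ⟨χ, hχ, h0, h1, -⟩ := exists_contDiff_cutoff isClosed_closure Metric.isOpen_ball hR
  have hχs : HasCompactSupport χ := by
    refine HasCompactSupport.of_support_subset_isCompact (isCompact_closedBall 0 R) fun x hx => ?_
    by_contra hx'
    exact hx (h0.self_of_nhdsSet x fun hh => hx' (Metric.ball_subset_closedBall hh))
  have hint : ∀ g : (Fin n → ℝ) → (Fin n → ℝ), ContDiff ℝ 1 g →
      Integrable (fun x => (fderiv ℝ (fun y => χ y • g y) x).det) ∧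
      (∫ x in U, (fderiv ℝ g x).det) + ∫ x in Uᶜ, (fderiv ℝ (fun y => χ y • g y) x).det = 0 := by
    intro g hg
    have hG : ContDiff ℝ 1 fun y => χ y • g y := hχ.smul hg
    have hGc : HasCompactSupport fun y => χ y • g y := hχs.smul_right
    have hi : Integrable (fun x => (fderiv ℝ (fun y => χ y • g y) x).det) := by
      refine Continuous.integrable_of_hasCompactSupport
        (ContinuousLinearMap.continuous_det.comp (hG.continuous_fderiv one_ne_zero)) ?_
      refine (hGc.fderiv ℝ).mono fun x hx => ?_
      contrapose! hx
      have : Nonempty (Fin n) := ⟨⟨0, hn⟩⟩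
      simp [Function.notMem_support.1 hx, ContinuousLinearMap.det]
    refine ⟨hi, ?_⟩
    rw [← integral_det_fderiv_eq_zero hn hG hGc, ← integral_add_compl hU.measurableSet hi]
    congr 1
    refine setIntegral_congr_fun hU.measurableSet fun x hx => ?_
    have : (fun y => χ y • g y) =ᶠ[𝓝 x] g := by
      filter_upwards [h1.filter_mono (nhds_le_nhdsSet (subset_closure hx))] with y hy
      simp [hy]
    simp only [this.fderiv_eq]
  have e0 := (hint g hg).2
  have e1 := (hint g₁ hg₁).2
  have : ∫ x in Uᶜ, (fderiv ℝ (fun y => χ y • g y) x).det =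
      ∫ x in Uᶜ, (fderiv ℝ (fun y => χ y • g₁ y) x).det := by
    refine setIntegral_congr_fun hU.measurableSet.compl fun x hx => ?_
    have : (fun y => χ y • g y) =ᶠ[𝓝 x] (fun y => χ y • g₁ y) := by
      filter_upwards [hK.isOpen_compl.mem_nhds fun hxK => hx (hKU hxK)] with y hy
      rw [h y hy]
    simp only [this.fderiv_eq]
  linarith
/-- The tent function supported in `[-1, 1]`. -/
noncomputable def hat (t : ℝ) : ℝ := max 0 (1 - |t|)

/-- The primitive of the tent function vanishing at the origin. -/
noncomputable def hatPrimitive (t : ℝ) : ℝ := ∫ x in (0 : ℝ)..t, hat x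

/-- A continuous density supported in the closed unit ball of `Fin n → ℝ`. -/
noncomputable def bumpDensity (y : Fin n → ℝ) : ℝ := ∏ i, hat (y i)

/-- The integral of the pullback of `bumpDensity` over `U`; up to a constant factor this is the
topological degree of `u` on `U` at `0`. -/
noncomputable def degreeIntegral (u : (Fin n → ℝ) → (Fin n → ℝ)) (U : Set (Fin n → ℝ)) : ℝ :=
  ∫ x in U, bumpDensity (u x) * (fderiv ℝ u x).det

theorem continuous_hat : Continuous hat := by
  unfold hat; fun_prop

theorem hat_nonneg (t : ℝ) : 0 ≤ hat t := le_max_left _ _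

theorem continuous_bumpDensity : Continuous (bumpDensity (n := n)) :=
  continuous_finsetProd _ fun i _ => continuous_hat.comp (continuous_apply i)

theorem bumpDensity_nonneg (y : Fin n → ℝ) : 0 ≤ bumpDensity y :=
  Finset.prod_nonneg fun _ _ => hat_nonneg _

theorem bumpDensity_eq_zero {y : Fin n → ℝ} (hy : 1 < ‖y‖) : bumpDensity y = 0 := by
  obtain ⟨i, hi⟩ : ∃ i, 1 < ‖y i‖ := by
    by_contra! h
    exact absurd ((pi_norm_le_iff_of_nonneg zero_le_one).2 h) (not_le.2 hy)
  refine Finset.prod_eq_zero (Finset.mem_univ i) (max_eq_left ?_)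
  rw [Real.norm_eq_abs] at hi
  linarith

theorem integral_bumpDensity_pos : 0 < ∫ y : Fin n → ℝ, bumpDensity y := by
  refine continuous_bumpDensity.integral_pos_of_hasCompactSupport_nonneg_nonzero ?_
    bumpDensity_nonneg (x := 0) ?_
  · refine HasCompactSupport.of_support_subset_isCompact (isCompact_closedBall 0 1) fun x hx => ?_
    by_contra h
    rw [mem_closedBall_zero_iff, not_le] at h
    exact hx (bumpDensity_eq_zero h)
  · simp [bumpDensity, hat]

theorem hasDerivAt_hatPrimitive (t : ℝ) : HasDerivAt hatPrimitive (hat t) t :=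
  continuous_hat.integral_hasStrictDerivAt 0 t |>.hasDerivAt

theorem contDiff_hatPrimitive : ContDiff ℝ 1 hatPrimitive := by
  rw [contDiff_one_iff_deriv]
  refine ⟨fun t => (hasDerivAt_hatPrimitive t).differentiableAt, ?_⟩
  rw [show deriv hatPrimitive = hat from funext fun t => (hasDerivAt_hatPrimitive t).deriv]
  exact continuous_hat

theorem contDiff_pi_hatPrimitive :
    ContDiff ℝ 1 fun (y : Fin n → ℝ) i => hatPrimitive (y i) :=
  contDiff_pi.2 fun i => contDiff_hatPrimitive.comp (contDiff_apply ℝ ℝ i)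

theorem det_fderiv_pi_hatPrimitive (y : Fin n → ℝ) :
    (fderiv ℝ (fun (y : Fin n → ℝ) i => hatPrimitive (y i)) y).det = bumpDensity y := by
  have h : HasFDerivAt (fun (y : Fin n → ℝ) i => hatPrimitive (y i))
      (ContinuousLinearMap.pi fun i => hat (y i) • ContinuousLinearMap.proj (R := ℝ) i) y :=
    hasFDerivAt_pi.2 fun i =>
      (hasDerivAt_hatPrimitive (y i)).comp_hasFDerivAt (f := fun y : Fin n → ℝ => y i) y
        (hasFDerivAt_apply (𝕜 := ℝ) i y)
  rw [h.fderiv, ContinuousLinearMap.det, ← LinearMap.det_toMatrix', bumpDensity,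
    ← Matrix.det_diagonal]
  congr 1
  ext i j
  simp [LinearMap.toMatrix'_apply, Matrix.diagonal_apply, Pi.single_apply]

theorem det_fderiv_hatPrimitive_comp {u : (Fin n → ℝ) → (Fin n → ℝ)} (hu : ContDiff ℝ 1 u)
    (x : Fin n → ℝ) :
    (fderiv ℝ (fun x i => hatPrimitive (u x i)) x).det =
      bumpDensity (u x) * (fderiv ℝ u x).det := by
  rw [← det_fderiv_pi_hatPrimitive]
  have := fderiv_comp x (contDiff_pi_hatPrimitive.differentiable one_ne_zero (u x))
    (hu.differentiable one_ne_zero x)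
  rw [show (fun x i => hatPrimitive (u x i)) =
    (fun (y : Fin n → ℝ) i => hatPrimitive (y i)) ∘ u from rfl, this]
  exact LinearMap.det_comp _ _

theorem degreeIntegral_congr (hn : 0 < n) {u u₁ : (Fin n → ℝ) → (Fin n → ℝ)}
    (hu : ContDiff ℝ 1 u) (hu₁ : ContDiff ℝ 1 u₁) {K U : Set (Fin n → ℝ)} (hK : IsClosed K)
    (hU : IsOpen U) (hUb : Bornology.IsBounded U) (hKU : K ⊆ U) (h : ∀ x ∉ K, u x = u₁ x) :
    degreeIntegral u U = degreeIntegral u₁ U := by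
  simp only [degreeIntegral]
  simp_rw [← det_fderiv_hatPrimitive_comp hu, ← det_fderiv_hatPrimitive_comp hu₁]
  refine setIntegral_det_fderiv_congr hn (contDiff_pi_hatPrimitive.comp hu)
    (contDiff_pi_hatPrimitive.comp hu₁) hK hU hUb hKU fun x hx => ?_
  simp only [Function.comp_apply, h x hx]

theorem degreeIntegral_eq_of_segment (hn : 0 < n) {u u₁ : (Fin n → ℝ) → (Fin n → ℝ)}
    (hu : ContDiff ℝ 1 u) (hu₁ : ContDiff ℝ 1 u₁) {U : Set (Fin n → ℝ)}
    (hU : IsOpen U) (hUb : Bornology.IsBounded U)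
    (h : ∀ x ∈ frontier U, ∀ t ∈ Icc (0 : ℝ) 1, 1 < ‖u x + t • (u₁ x - u x)‖) :
    degreeIntegral u U = degreeIntegral u₁ U := by
  have hUc : IsCompact (closure U) := hUb.isCompact_closure
  have huc := hu.continuous
  have huc₁ := hu₁.continuous
  set K : Set (Fin n → ℝ) := Prod.fst '' ((closure U ×ˢ Icc (0 : ℝ) 1) ∩
    {p | ‖u p.1 + p.2 • (u₁ p.1 - u p.1)‖ ≤ 1}) with hKdef
  have hK : IsClosed K := by
    refine (((hUc.prod isCompact_Icc).inter_right
      (isClosed_le ?_ continuous_const)).image continuous_fst).isClosed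
    fun_prop
  have hKU : K ⊆ U := by
    rintro _ ⟨⟨x, t⟩, ⟨⟨hx, ht⟩, hle⟩, rfl⟩
    by_contra hxU
    refine absurd (h x ⟨hx, ?_⟩ t ht) (not_lt.2 hle)
    rwa [hU.interior_eq]
  have hnotK : ∀ x ∈ U, x ∉ K → ∀ t ∈ Icc (0 : ℝ) 1, 1 < ‖u x + t • (u₁ x - u x)‖ := by
    intro x hx hxK t ht
    by_contra! hle
    exact hxK ⟨(x, t), ⟨⟨subset_closure hx, ht⟩, hle⟩, rfl⟩
  obtain ⟨χ, hχ, h0, h1, h01⟩ := exists_contDiff_cutoff hK hU hKU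
  set w : (Fin n → ℝ) → (Fin n → ℝ) := fun x => u x + χ x • (u₁ x - u x) with hw
  have hwC : ContDiff ℝ 1 w := hu.add (hχ.smul (hu₁.sub hu))
  have e1 : degreeIntegral w U = degreeIntegral u U := by
    refine degreeIntegral_congr hn hwC hu (isClosed_tsupport χ) hU hUb ?_ ?_
    · intro x hx
      by_contra hxU
      exact notMem_tsupport_iff_eventuallyEq.2 (h0.filter_mono (nhds_le_nhdsSet hxU)) hx
    · intro x hx
      simp [hw, image_eq_zero_of_notMem_tsupport hx]
  rw [← e1]
  refine setIntegral_congr_fun hU.measurableSet fun x hx => ?_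
  by_cases hxK : x ∈ K
  · have : w =ᶠ[𝓝 x] u₁ := by
      filter_upwards [h1.filter_mono (nhds_le_nhdsSet hxK)] with y hy
      simp [hw, hy]
    simp only [this.fderiv_eq, this.eq_of_nhds]
  · have a := hnotK x hx hxK 1 (by simp)
    rw [one_smul, add_sub_cancel] at a
    simp only [bumpDensity_eq_zero a, bumpDensity_eq_zero (hnotK x hx hxK (χ x) (h01 x)), hw,
      zero_mul]

theorem degreeIntegral_eq_of_homotopy (hn : 0 < n)
    {H : unitInterval → (Fin n → ℝ) → (Fin n → ℝ)} (hH : ∀ s, ContDiff ℝ 1 (H s))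
    (hHc : Continuous fun p : unitInterval × (Fin n → ℝ) => H p.1 p.2) {U : Set (Fin n → ℝ)}
    (hU : IsOpen U) (hUb : Bornology.IsBounded U) (h : ∀ s, ∀ x ∈ frontier U, 1 < ‖H s x‖) :
    degreeIntegral (H 0) U = degreeIntegral (H 1) U := by
  have hfr : IsCompact (frontier U) :=
    hUb.isCompact_closure.of_isClosed_subset isClosed_frontier frontier_subset_closure
  have hloc : IsLocallyConstant fun s => degreeIntegral (H s) U := by
    rw [IsLocallyConstant.iff_eventually_eq]
    intro s
    have := (hfr.prod
      (isCompact_Icc (a := (0 : ℝ)) (b := 1))).eventually_forall_of_forall_eventually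
      (x₀ := s) (P := fun s' q => 1 < ‖H s q.1 + q.2 • (H s' q.1 - H s q.1)‖) (by
        rintro ⟨x, t⟩ ⟨hx, ht⟩
        have hc : Continuous fun p : unitInterval × ((Fin n → ℝ) × ℝ) =>
            ‖H s p.2.1 + p.2.2 • (H p.1 p.2.1 - H s p.2.1)‖ := by
          have h1 : Continuous fun p : unitInterval × ((Fin n → ℝ) × ℝ) => H s p.2.1 :=
            (hH s).continuous.comp (by fun_prop)
          have h2 : Continuous fun p : unitInterval × ((Fin n → ℝ) × ℝ) => H p.1 p.2.1 :=
            hHc.comp (f := fun p : unitInterval × ((Fin n → ℝ) × ℝ) => (p.1, p.2.1)) (by fun_prop)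
          fun_prop
        exact hc.continuousAt.eventually (lt_mem_nhds (by simpa using h s x hx)))
    filter_upwards [this] with s' hs'
    exact (degreeIntegral_eq_of_segment hn (hH s) (hH s') hU hUb
      fun x hx t ht => hs' (x, t) ⟨hx, ht⟩).symm
  exact hloc.apply_eq_of_preconnectedSpace 0 1
theorem degreeIntegral_eq_sum {ι : Type*} {u : (Fin n → ℝ) → (Fin n → ℝ)} (hu : ContDiff ℝ 1 u)
    {U : Set (Fin n → ℝ)} (hU : IsOpen U) (hUb : Bornology.IsBounded U) (s : Finset ι)
    {W : ι → Set (Fin n → ℝ)} (hW : ∀ i ∈ s, IsOpen (W i)) (hWU : ∀ i ∈ s, W i ⊆ U)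
    (hd : (s : Set ι).PairwiseDisjoint W) (h : ∀ x ∈ U, (∀ i ∈ s, x ∉ W i) → 1 < ‖u x‖) :
    degreeIntegral u U = ∑ i ∈ s, degreeIntegral u (W i) := by
  have hcont : Continuous fun x => bumpDensity (u x) * (fderiv ℝ u x).det :=
    (continuous_bumpDensity.comp hu.continuous).mul
      (ContinuousLinearMap.continuous_det.comp (hu.continuous_fderiv one_ne_zero))
  have hint : IntegrableOn (fun x => bumpDensity (u x) * (fderiv ℝ u x).det) U :=
    (hcont.continuousOn.integrableOn_compact hUb.isCompact_closure).mono_set subset_closure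
  simp only [degreeIntegral]
  rw [← integral_biUnion_finset s (fun i hi => (hW i hi).measurableSet) hd
    fun i hi => hint.mono_set (hWU i hi)]
  refine setIntegral_eq_of_subset_of_forall_sdiff_eq_zero hU.measurableSet
    (iUnion₂_subset hWU) fun x hx => ?_
  rw [bumpDensity_eq_zero (h x hx.1 fun i hi hxi => hx.2 (mem_biUnion hi hxi)), zero_mul]

theorem setIntegral_bumpDensity_comp_mul_abs_det {u : (Fin n → ℝ) → (Fin n → ℝ)}
    (hu : ContDiff ℝ 1 u) {N : Set (Fin n → ℝ)} (hN : IsOpen N) (hinj : InjOn u N)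
    (hball : Metric.closedBall 0 1 ⊆ u '' N) :
    ∫ x in N, bumpDensity (u x) * |(fderiv ℝ u x).det| = ∫ y : Fin n → ℝ, bumpDensity y := by
  have := integral_image_eq_integral_abs_det_fderiv_smul volume hN.measurableSet
    (fun x _ => ((hu.differentiable one_ne_zero x).hasFDerivAt).hasFDerivWithinAt) hinj bumpDensity
  rw [setIntegral_eq_integral_of_forall_compl_eq_zero] at this
  · rw [this]
    simp only [smul_eq_mul, mul_comm]
  · intro y hy
    refine bumpDensity_eq_zero (not_le.1 fun hle => hy (hball ?_))
    rwa [mem_closedBall_zero_iff]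

theorem degreeIntegral_of_injOn_of_pos {u : (Fin n → ℝ) → (Fin n → ℝ)}
    (hu : ContDiff ℝ 1 u) {N : Set (Fin n → ℝ)} (hN : IsOpen N) (hinj : InjOn u N)
    (hball : Metric.closedBall 0 1 ⊆ u '' N) (hdet : ∀ x ∈ N, 0 < (fderiv ℝ u x).det) :
    degreeIntegral u N = ∫ y : Fin n → ℝ, bumpDensity y := by
  rw [← setIntegral_bumpDensity_comp_mul_abs_det hu hN hinj hball]
  exact setIntegral_congr_fun hN.measurableSet fun x hx => by
    simp only [abs_of_pos (hdet x hx)]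

theorem degreeIntegral_of_injOn_of_neg {u : (Fin n → ℝ) → (Fin n → ℝ)}
    (hu : ContDiff ℝ 1 u) {N : Set (Fin n → ℝ)} (hN : IsOpen N) (hinj : InjOn u N)
    (hball : Metric.closedBall 0 1 ⊆ u '' N) (hdet : ∀ x ∈ N, (fderiv ℝ u x).det < 0) :
    degreeIntegral u N = -∫ y : Fin n → ℝ, bumpDensity y := by
  rw [← setIntegral_bumpDensity_comp_mul_abs_det hu hN hinj hball, ← integral_neg]
  exact setIntegral_congr_fun hN.measurableSet fun x hx => by
    simp only [abs_of_neg (hdet x hx), mul_neg, neg_neg]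

theorem det_fderiv_smul_sub {u : (Fin n → ℝ) → (Fin n → ℝ)} (hu : ContDiff ℝ 1 u) (M : ℝ)
    (a x : Fin n → ℝ) :
    (fderiv ℝ (fun x => M • (u x - a)) x).det = M ^ n * (fderiv ℝ u x).det := by
  have h : HasFDerivAt (fun x => M • (u x - a)) (M • fderiv ℝ u x) x :=
    ((hu.differentiable one_ne_zero x).hasFDerivAt.sub_const a).const_smul M
  rw [h.fderiv]
  exact (LinearMap.det_smul M _).trans (by simp [ContinuousLinearMap.det])

theorem closedBall_subset_image_smul_sub {u : (Fin n → ℝ) → (Fin n → ℝ)} {N : Set (Fin n → ℝ)}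
    {a : Fin n → ℝ} {r : ℝ} (hr : 0 < r) (h : Metric.closedBall a r ⊆ u '' N) :
    Metric.closedBall 0 1 ⊆ (fun x => r⁻¹ • (u x - a)) '' N := by
  intro y hy
  rw [mem_closedBall_zero_iff] at hy
  obtain ⟨x, hx, hxy⟩ := h (show a + r • y ∈ Metric.closedBall a r by
    rw [mem_closedBall_iff_norm, add_sub_cancel_left, norm_smul, Real.norm_of_nonneg hr.le]
    nlinarith)
  exact ⟨x, hx, by simp [hxy, smul_smul, hr.ne']⟩

theorem degreeIntegral_smul_sub {U : Set (Fin n → ℝ)} (hU : IsOpen U) {b : Fin n → ℝ} {r : ℝ}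
    (hr : 0 < r) (h : Metric.closedBall b r ⊆ U) :
    degreeIntegral (fun x => r⁻¹ • (x - b)) U = ∫ y : Fin n → ℝ, bumpDensity y := by
  have hC : ContDiff ℝ 1 fun x : Fin n → ℝ => r⁻¹ • (x - b) :=
    (contDiff_id.sub contDiff_const).const_smul r⁻¹
  refine degreeIntegral_of_injOn_of_pos hC hU ?_
    (closedBall_subset_image_smul_sub (u := id) hr (by simpa using h)) fun x _ => ?_
  · intro x _ y _ hxy
    simpa [hr.ne'] using hxy
  · have := det_fderiv_smul_sub (n := n) contDiff_id r⁻¹ b x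
    simp only [id] at this
    rw [this]
    have h1 : (fderiv ℝ (fun x : Fin n → ℝ => x) x).det = 1 := by
      rw [fderiv_fun_id]; exact LinearMap.det_id
    rw [show (id : (Fin n → ℝ) → _) = fun x => x from rfl, h1]
    positivity

theorem exists_isOpen_injOn_of_det_fderiv_ne_zero {u : (Fin n → ℝ) → (Fin n → ℝ)}
    (hu : ContDiff ℝ 1 u) {z : Fin n → ℝ} (hz : (fderiv ℝ u z).det ≠ 0) :
    (∃ N, IsOpen N ∧ z ∈ N ∧ InjOn u N ∧
      ∀ x ∈ N, 0 < (fderiv ℝ u z).det * (fderiv ℝ u x).det) ∧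
    ∀ N ∈ 𝓝 z, u '' N ∈ 𝓝 (u z) := by
  set A := ContinuousLinearMap.toContinuousLinearEquivOfDetNeZero _ hz
  have hA : HasStrictFDerivAt u (A : (Fin n → ℝ) →L[ℝ] (Fin n → ℝ)) z :=
    hu.contDiffAt.hasStrictFDerivAt one_ne_zero
  refine ⟨⟨(hA.toOpenPartialHomeomorph u).source ∩
    {x | 0 < (fderiv ℝ u z).det * (fderiv ℝ u x).det}, ?_, ?_, ?_, fun x hx => hx.2⟩,
    fun N hN => ?_⟩
  · refine (hA.toOpenPartialHomeomorph u).open_source.inter (isOpen_lt continuous_const ?_)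
    exact continuous_const.mul
      (ContinuousLinearMap.continuous_det.comp (hu.continuous_fderiv one_ne_zero))
  · exact ⟨hA.mem_toOpenPartialHomeomorph_source, mul_self_pos.2 hz⟩
  · exact (hA.toOpenPartialHomeomorph u).injOn.mono inter_subset_left
  · rw [← hA.map_nhds_eq_of_equiv]
    exact image_mem_map hN

theorem exists_int_degreeIntegral_eq (hn : 0 < n) {u : (Fin n → ℝ) → (Fin n → ℝ)}
    (hu : ContDiff ℝ 1 u) {U : Set (Fin n → ℝ)} (hU : IsOpen U) (hUb : Bornology.IsBounded U)
    (h : ∀ x ∈ frontier U, 1 < ‖u x‖) :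
    ∃ c : ℤ, degreeIntegral u U = c * ∫ y : Fin n → ℝ, bumpDensity y := by
  classical
  have hUc : IsCompact (closure U) := hUb.isCompact_closure
  have hfr : IsCompact (frontier U) :=
    hUc.of_isClosed_subset isClosed_frontier frontier_subset_closure
  obtain ⟨m, hm1, hm⟩ := hfr.exists_forall_le' hu.continuous.norm.continuousOn h
  set δ := m - 1 with hδ
  have hδ0 : 0 < δ := by linarith
  -- a small regular value
  obtain ⟨a, haδ, hareg⟩ : ∃ a ∈ Metric.ball (0 : Fin n → ℝ) (δ / 2),
      a ∉ u '' {x | (fderiv ℝ u x).det = 0} := by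
    by_contra! hcon
    have h0 := addHaar_image_eq_zero_of_det_fderivWithin_eq_zero
      (volume : Measure (Fin n → ℝ)) (s := {x | (fderiv ℝ u x).det = 0})
      (fun x _ => ((hu.differentiable one_ne_zero x).hasFDerivAt).hasFDerivWithinAt)
      fun x hx => hx
    exact (Metric.measure_ball_pos volume (0 : Fin n → ℝ) (half_pos hδ0)).ne'
      (measure_mono_null hcon h0)
  rw [mem_ball_zero_iff] at haδ
  set Z := closure U ∩ {x | u x = a} with hZ
  have hZc : IsCompact Z := hUc.inter_right (isClosed_eq hu.continuous continuous_const)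
  have hZU : Z ⊆ U := by
    rintro x ⟨hx, hxa⟩
    by_contra hxU
    have := hm x ⟨hx, by rwa [hU.interior_eq]⟩
    rw [show u x = a from hxa] at this
    linarith
  have hZdet : ∀ z ∈ Z, (fderiv ℝ u z).det ≠ 0 := fun z hz hz0 => hareg ⟨z, hz0, hz.2⟩
  have hloc : ∀ z, ∃ N, z ∈ Z → (IsOpen N ∧ z ∈ N ∧ InjOn u N ∧
      ∀ x ∈ N, 0 < (fderiv ℝ u z).det * (fderiv ℝ u x).det) := fun z => by
    by_cases hz : z ∈ Z
    · obtain ⟨N, hN⟩ := (exists_isOpen_injOn_of_det_fderiv_ne_zero hu (hZdet z hz)).1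
      exact ⟨N, fun _ => hN⟩
    · exact ⟨∅, fun h => absurd h hz⟩
  choose N₀ hN₀ using hloc
  have hZfin : Z.Finite := by
    obtain ⟨t, htZ, ht⟩ := hZc.elim_nhds_subcover N₀
      fun z hz => (hN₀ z hz).1.mem_nhds (hN₀ z hz).2.1
    refine t.finite_toSet.subset fun x hx => ?_
    obtain ⟨z, hz, hxz⟩ := mem_iUnion₂.1 (ht hx)
    have := (hN₀ z (htZ z hz)).2.2.1 hxz (hN₀ z (htZ z hz)).2.1
      ((show u x = a from hx.2).trans (htZ z hz).2.symm)
    rwa [this]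
  obtain ⟨O, hO, hOd⟩ := hZfin.t2_separation
  set N : (Fin n → ℝ) → Set (Fin n → ℝ) := fun z => N₀ z ∩ O z ∩ U with hN
  have hNopen : ∀ z ∈ Z, IsOpen (N z) := fun z hz => ((hN₀ z hz).1.inter (hO z).2).inter hU
  have hzN : ∀ z ∈ Z, z ∈ N z := fun z hz => ⟨⟨(hN₀ z hz).2.1, (hO z).1⟩, hZU hz⟩
  obtain ⟨r, hr0, hr1, hrN, hrout⟩ : ∃ r : ℝ, 0 < r ∧ r ≤ 1 ∧
      (∀ z ∈ Z, Metric.closedBall a r ⊆ u '' N z) ∧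
      ∀ x ∈ closure U \ ⋃ z ∈ Z, N z, r < ‖u x - a‖ := by
    have e1 : ∀ᶠ r in 𝓝[>] (0 : ℝ), ∀ z ∈ Z, Metric.closedBall a r ⊆ u '' N z := by
      rw [hZfin.eventually_all]
      intro z hz
      have := (exists_isOpen_injOn_of_det_fderiv_ne_zero hu (hZdet z hz)).2 (N z)
        ((hNopen z hz).mem_nhds (hzN z hz))
      rw [show u z = a from hz.2] at this
      obtain ⟨ε, hε, hball⟩ := Metric.nhds_basis_closedBall.mem_iff.1 this
      filter_upwards [Ioc_mem_nhdsGT hε] with r hr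
      exact (Metric.closedBall_subset_closedBall hr.2).trans hball
    have hcomp : IsCompact (closure U \ ⋃ z ∈ Z, N z) :=
      hUc.diff (isOpen_biUnion hNopen)
    obtain ⟨ρ, hρ0, hρ⟩ := hcomp.exists_forall_le' (a := (0 : ℝ)) (f := fun x => ‖u x - a‖)
      (hu.continuous.sub continuous_const).norm.continuousOn (by
        intro x hx
        rw [norm_pos_iff, sub_ne_zero]
        intro hxa
        exact hx.2 (mem_biUnion (⟨hx.1, hxa⟩ : x ∈ Z) (hzN x ⟨hx.1, hxa⟩)))
    obtain ⟨r, ⟨hr, hrρ⟩, hr1⟩ :=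
      ((e1.and (Ioo_mem_nhdsGT hρ0)).and (Ioc_mem_nhdsGT one_pos)).exists
    exact ⟨r, hr1.1, hr1.2, hr, fun x hx => hrρ.2.trans_le (hρ x hx)⟩
  have hw : ContDiff ℝ 1 fun x => r⁻¹ • (u x - a) :=
    (hu.sub contDiff_const).const_smul r⁻¹
  have hM : 1 ≤ r⁻¹ := (one_le_inv₀ hr0).2 hr1
  rw [degreeIntegral_eq_of_segment hn hu hw hU hUb, degreeIntegral_eq_sum hw hU hUb hZfin.toFinset
    (W := N)]
  · have hval : ∀ z, ∃ c : ℤ, z ∈ Z → degreeIntegral (fun x => r⁻¹ • (u x - a)) (N z) =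
        c * ∫ y : Fin n → ℝ, bumpDensity y := by
      intro z
      by_cases hz : z ∈ Z
      swap
      · exact ⟨0, fun h => absurd h hz⟩
      have hinj : InjOn (fun x => r⁻¹ • (u x - a)) (N z) := by
        intro x hx y hy hxy
        refine (hN₀ z hz).2.2.1 hx.1.1 hy.1.1 ?_
        simpa [hr0.ne'] using hxy
      have hb := closedBall_subset_image_smul_sub hr0 (hrN z hz)
      have hrn : 0 < r⁻¹ ^ n := by positivity
      rcases (hZdet z hz).lt_or_gt with hneg | hpos
      · refine ⟨-1, fun _ => ?_⟩
        rw [degreeIntegral_of_injOn_of_neg hw (hNopen z hz) hinj hb]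
        · simp
        · intro x hx
          rw [det_fderiv_smul_sub hu]
          exact mul_neg_of_pos_of_neg hrn
            (neg_of_mul_pos_right ((hN₀ z hz).2.2.2 x hx.1.1) hneg.le)
      · refine ⟨1, fun _ => ?_⟩
        rw [degreeIntegral_of_injOn_of_pos hw (hNopen z hz) hinj hb]
        · simp
        · intro x hx
          rw [det_fderiv_smul_sub hu]
          exact mul_pos hrn (pos_of_mul_pos_right ((hN₀ z hz).2.2.2 x hx.1.1) hpos.le)
    choose c hc using hval
    refine ⟨∑ z ∈ hZfin.toFinset, c z, ?_⟩
    rw [Int.cast_sum, Finset.sum_mul]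
    exact Finset.sum_congr rfl fun z hz => hc z (hZfin.mem_toFinset.1 hz)
  · exact fun z hz => hNopen z (hZfin.mem_toFinset.1 hz)
  · exact fun z _ => inter_subset_right
  · rw [hZfin.coe_toFinset]
    exact hOd.mono fun z => inter_subset_left.trans inter_subset_right
  · intro x hx hxN
    have := hrout x ⟨subset_closure hx, by
      simpa using fun z hz => hxN z (hZfin.mem_toFinset.2 hz)⟩
    rw [norm_smul, norm_inv, Real.norm_of_nonneg hr0.le, ← div_eq_inv_mul]
    exact (one_lt_div hr0).2 this
  · intro x hx t ht
    have hux := hm x hx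
    set k := 1 - t + t * r⁻¹ with hk
    have hk1 : 1 ≤ k := by nlinarith [ht.1]
    have e : u x + t • (r⁻¹ • (u x - a) - u x) = k • u x - (t * r⁻¹) • a := by
      rw [hk]; module
    have h1 : k * ‖u x‖ - (t * r⁻¹) * ‖a‖ ≤ ‖k • u x - (t * r⁻¹) • a‖ := by
      refine le_trans (le_of_eq ?_) (norm_sub_norm_le _ _)
      rw [norm_smul, norm_smul, Real.norm_of_nonneg (by linarith),
        Real.norm_of_nonneg (mul_nonneg ht.1 (by linarith))]
    have h2 : t * r⁻¹ * ‖a‖ ≤ k * (δ / 2) :=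
      mul_le_mul (by linarith [ht.2]) haδ.le (norm_nonneg _) (by linarith)
    have h3 : k * (1 + δ) ≤ k * ‖u x‖ := mul_le_mul_of_nonneg_left (by linarith) (by linarith)
    rw [e]
    nlinarith
theorem degreeIntegral_comp_add_left (u : (Fin n → ℝ) → (Fin n → ℝ)) (a : Fin n → ℝ)
    (W : Set (Fin n → ℝ)) :
    degreeIntegral (fun x => u (a + x)) ((fun x => a + x) ⁻¹' W) = degreeIntegral u W := by
  simp only [degreeIntegral, fderiv_comp_add_left]
  exact (measurePreserving_add_left volume a).setIntegral_preimage_emb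
    (measurableEmbedding_addLeft a) (fun x => bumpDensity (u x) * (fderiv ℝ u x).det) W

theorem frontier_preimage_subset_of_continuous {X Y : Type*} [TopologicalSpace X]
    [TopologicalSpace Y] {f : X → Y} (hf : Continuous f) {s : Set Y} (hs : IsOpen s) :
    frontier (f ⁻¹' s) ⊆ f ⁻¹' frontier s := by
  rw [(hs.preimage hf).frontier_eq, hs.frontier_eq]
  exact fun x hx => ⟨hf.closure_preimage_subset s hx.1, hx.2⟩

/-- Counting the fixed points of a map from its uniform finite-dimensional approximation `g`. -/
theorem card_eq_one_of_approximation {V : Type*} [NormedAddCommGroup V] [NormedSpace ℝ V]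
    (hn : 0 < n) {L : (Fin n → ℝ) →L[ℝ] V} (hL : Function.Injective L) {B : Set V}
    (hB : IsOpen B) (hBb : Bornology.IsBounded B) {T : V → V} {g : (Fin n → ℝ) → (Fin n → ℝ)}
    (hg : ContDiff ℝ 1 g) {Z : Finset (Fin n → ℝ)} {b : Fin n → ℝ} {ε ρ : ℝ} (hε : 0 < ε)
    (hb : L b ∈ B) (happ : ∀ x, L x ∈ closure B → ‖L (g x) - T (L x)‖ ≤ ε)
    (hbd : ∀ x ∈ frontier B, ∀ t ∈ Icc (0 : ℝ) 1, 2 * ε ≤ ‖x - ((1 - t) • L b + t • T x)‖)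
    (hZ : ∀ z ∈ Z, T (L z) = L z) (hball : ∀ z ∈ Z, Metric.ball (L z) ρ ⊆ B)
    (hdisj : (Z : Set (Fin n → ℝ)).PairwiseDisjoint fun z => Metric.ball (L z) ρ)
    (hout : ∀ x ∈ closure B, (∀ z ∈ Z, x ∉ Metric.ball (L z) ρ) → 2 * ε ≤ ‖x - T x‖)
    (hseg : ∀ z ∈ Z, ∀ z' ∈ Z, ∀ s ∈ Icc (0 : ℝ) 1, ∀ h : V, ‖h‖ = ρ →
      L z + s • (L z' - L z) ∈ B ∧ L z + s • (L z' - L z) + h ∈ B ∧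
      4 * ε ≤ ‖(L z + s • (L z' - L z) + h - T (L z + s • (L z' - L z) + h)) -
        (L z + s • (L z' - L z) - T (L z + s • (L z' - L z)))‖) :
    Z.card = 1 := by
  obtain ⟨κ, -, hκ⟩ := (L : (Fin n → ℝ) →ₗ[ℝ] V).exists_antilipschitzWith
    (LinearMap.ker_eq_bot.2 hL)
  have hpreb : ∀ s : Set V, Bornology.IsBounded s → Bornology.IsBounded (L ⁻¹' s) :=
    fun s hs => hκ.isBounded_preimage hs
  have hU : IsOpen (L ⁻¹' B) := hB.preimage L.continuous
  obtain ⟨r, hr0, hrU, hrε⟩ : ∃ r : ℝ, 0 < r ∧ Metric.closedBall b r ⊆ L ⁻¹' B ∧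
      r * ‖L‖ < ε := by
    obtain ⟨r₁, hr₁, h₁⟩ := Metric.nhds_basis_closedBall.mem_iff.1 (hU.mem_nhds hb)
    refine ⟨min r₁ (ε / (‖L‖ + 1)), by positivity,
      (Metric.closedBall_subset_closedBall (min_le_left _ _)).trans h₁, ?_⟩
    have h := min_le_right r₁ (ε / (‖L‖ + 1))
    rw [le_div_iff₀ (by positivity)] at h
    have : 0 < min r₁ (ε / (‖L‖ + 1)) := by positivity
    nlinarith
  have hlarge : ∀ y : Fin n → ℝ, ε ≤ ‖L y‖ → 1 < ‖r⁻¹ • y‖ := by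
    intro y hy
    rw [norm_smul, norm_inv, Real.norm_of_nonneg hr0.le, ← div_eq_inv_mul, one_lt_div hr0]
    by_contra! hyr
    have := L.le_opNorm y
    nlinarith [norm_nonneg L]
  set f : (Fin n → ℝ) → (Fin n → ℝ) := fun x => x - g x with hf
  have hfC : ContDiff ℝ 1 f := contDiff_id.sub hg
  have hfapp : ∀ x, L x ∈ closure B → ‖L (f x) - (L x - T (L x))‖ ≤ ε := by
    intro x hx
    have : L (f x) - (L x - T (L x)) = -(L (g x) - T (L x)) := by simp [hf]
    rw [this, norm_neg]
    exact happ x hx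
  set u : (Fin n → ℝ) → (Fin n → ℝ) := fun x => r⁻¹ • f x with hu
  have huC : ContDiff ℝ 1 u := hfC.const_smul r⁻¹
  set I : ℝ := ∫ y : Fin n → ℝ, bumpDensity y with hI
  have hI0 : 0 < I := integral_bumpDensity_pos
  have htotal : degreeIntegral u (L ⁻¹' B) = I := by
    rw [hI, ← degreeIntegral_smul_sub hU hr0 hrU]
    refine (degreeIntegral_eq_of_segment hn ((contDiff_id.sub contDiff_const).const_smul r⁻¹)
      huC hU (hpreb B hBb) fun x hx t ht => ?_).symm
    have hx' : L x ∈ frontier B := frontier_preimage_subset_of_continuous L.continuous hB hx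
    have e : r⁻¹ • (id x - b) + t • (u x - r⁻¹ • (id x - b)) =
        r⁻¹ • (x - ((1 - t) • b + t • g x)) := by
      simp only [hu, hf, id]; module
    change 1 < ‖r⁻¹ • (id x - b) + t • (u x - r⁻¹ • (id x - b))‖
    rw [e]
    refine hlarge _ ?_
    have h1 := hbd (L x) hx' t ht
    have h2 : L x - ((1 - t) • L b + t • T (L x)) =
        L (x - ((1 - t) • b + t • g x)) + t • (L (g x) - T (L x)) := by
      simp only [map_sub, map_add, map_smul]; module
    rw [h2] at h1
    have h3 := norm_add_le (L (x - ((1 - t) • b + t • g x))) (t • (L (g x) - T (L x)))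
    have h4 : ‖t • (L (g x) - T (L x))‖ ≤ ε := by
      rw [norm_smul, Real.norm_of_nonneg ht.1]
      have := happ x (frontier_subset_closure hx')
      nlinarith [ht.1, ht.2, norm_nonneg (L (g x) - T (L x))]
    linarith
  have hW0 : IsOpen (L ⁻¹' Metric.ball 0 ρ) := Metric.isOpen_ball.preimage L.continuous
  have hW0b : Bornology.IsBounded (L ⁻¹' Metric.ball 0 ρ) := hpreb _ Metric.isBounded_ball
  have hsum : I = ∑ z ∈ Z, degreeIntegral u (L ⁻¹' Metric.ball (L z) ρ) := by
    rw [← htotal]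
    refine degreeIntegral_eq_sum huC hU (hpreb B hBb) Z
      (fun z _ => Metric.isOpen_ball.preimage L.continuous)
      (fun z hz => preimage_mono (hball z hz))
      (fun z hz z' hz' hne => (hdisj hz hz' hne).preimage L) fun x hx hxZ => hlarge _ ?_
    have h1 := hout (L x) (subset_closure hx) hxZ
    have h2 := hfapp x (subset_closure hx)
    have h3 := norm_sub_norm_le (L x - T (L x)) (L (f x))
    rw [norm_sub_rev (L x - T (L x)) (L (f x))] at h3
    linarith
  have hshift : ∀ z, degreeIntegral u (L ⁻¹' Metric.ball (L z) ρ) =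
      degreeIntegral (fun x => u (z + x)) (L ⁻¹' Metric.ball 0 ρ) := by
    intro z
    rw [← degreeIntegral_comp_add_left u z]
    congr 1
    ext x
    simp
  set H : (Fin n → ℝ) → (Fin n → ℝ) → unitInterval → (Fin n → ℝ) → (Fin n → ℝ) :=
    fun z z' s x => r⁻¹ • (f (z + (s : ℝ) • (z' - z) + x) -
      (f (z + (s : ℝ) • (z' - z)) - (f z + (s : ℝ) • (f z' - f z)))) with hH
  have hHbd : ∀ z ∈ Z, ∀ z' ∈ Z, ∀ s, ∀ x ∈ frontier (L ⁻¹' Metric.ball 0 ρ),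
      1 < ‖H z z' s x‖ := by
    intro z hz z' hz' s x hx
    refine hlarge _ ?_
    have hxρ : ‖L x‖ = ρ := by
      have := frontier_preimage_subset_of_continuous L.continuous Metric.isOpen_ball hx
      simpa using Metric.frontier_ball_subset_sphere this
    obtain ⟨hp, hph, hle⟩ := hseg z hz z' hz' s s.2 (L x) hxρ
    set p := z + (s : ℝ) • (z' - z) with hpdef
    have hLp : L z + (s : ℝ) • (L z' - L z) = L p := by simp [hpdef]
    rw [hLp] at hp hph hle
    rw [← map_add] at hph hle
    have a1 := hfapp _ (subset_closure hph)
    have a2 := hfapp _ (subset_closure hp)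
    have hLz : ∀ w ∈ Z, ‖L (f w)‖ ≤ ε := by
      intro w hw
      obtain ⟨h0, -, -⟩ := hseg w hw w hw 0 (by simp) (L x) hxρ
      have := hfapp w (subset_closure (by simpa using h0))
      simpa [hZ w hw] using this
    have a3 : ‖L (f z) + (s : ℝ) • (L (f z') - L (f z))‖ ≤ ε := by
      have e : L (f z) + (s : ℝ) • (L (f z') - L (f z)) =
        (1 - (s : ℝ)) • L (f z) + (s : ℝ) • L (f z') := by module
      rw [e]
      have h0 := s.2.1
      have h1 := s.2.2
      refine (norm_add_le _ _).trans ?_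
      rw [norm_smul, norm_smul, Real.norm_of_nonneg h0, Real.norm_of_nonneg (by linarith)]
      have := hLz z hz
      have := hLz z' hz'
      nlinarith
    simp only [map_sub, map_add, map_smul] at a1 a2 a3 hle ⊢
    set A₁ := L (f (p + x))
    set A₂ := L (f p)
    set A₃ := L (f z) + (s : ℝ) • (L (f z') - L (f z))
    set F₁ := L p + L x - T (L p + L x)
    set F₂ := L p - T (L p)
    have e : F₁ - F₂ = (A₁ - (A₂ - A₃)) - (A₁ - F₁) + (A₂ - F₂) - A₃ := by abel
    rw [e] at hle
    have n1 := norm_sub_le ((A₁ - (A₂ - A₃)) - (A₁ - F₁) + (A₂ - F₂)) A₃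
    have n2 := norm_add_le ((A₁ - (A₂ - A₃)) - (A₁ - F₁)) (A₂ - F₂)
    have n3 := norm_sub_le (A₁ - (A₂ - A₃)) (A₁ - F₁)
    linarith
  have hconst : ∀ z ∈ Z, ∀ z' ∈ Z, degreeIntegral u (L ⁻¹' Metric.ball (L z) ρ) =
      degreeIntegral u (L ⁻¹' Metric.ball (L z') ρ) := by
    intro z hz z' hz'
    have hfc := hfC.continuous
    have := degreeIntegral_eq_of_homotopy hn (H := H z z')
      (fun s => ((hfC.comp (contDiff_const.add contDiff_id)).sub contDiff_const).const_smul r⁻¹)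
      (by simp only [hH]; fun_prop) hW0 hW0b (hHbd z hz z' hz')
    rw [hshift, hshift]
    convert this using 2
    · ext1 x; simp [hH, hu]
    · ext1 x; simp [hH, hu]
  obtain ⟨z₀, hz₀⟩ : Z.Nonempty := by
    by_contra hZe
    rw [Finset.not_nonempty_iff_eq_empty.1 hZe, Finset.sum_empty] at hsum
    exact hI0.ne' hsum
  obtain ⟨c, hc⟩ := exists_int_degreeIntegral_eq hn
    (u := fun x => u (z₀ + x)) (huC.comp (contDiff_const.add contDiff_id)) hW0 hW0b (by
      intro x hx
      simpa [hH, hu] using hHbd z₀ hz₀ z₀ hz₀ 0 x hx)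
  rw [← hshift] at hc
  rw [Finset.sum_congr rfl fun z hz => (hconst z hz z₀ hz₀).trans hc, Finset.sum_const,
    nsmul_eq_mul, ← mul_assoc] at hsum
  have h1 : ((Z.card : ℤ) * c : ℝ) = 1 := by
    refine mul_right_cancel₀ hI0.ne' ?_
    rw [one_mul, Int.cast_natCast]
    exact hsum.symm
  have h2 : (Z.card : ℤ) * c = 1 := by exact_mod_cast h1
  have h3 := Int.eq_one_or_neg_one_of_mul_eq_one h2
  lia

theorem HasFDerivAt.isCompactOperator {V : Type*} [NormedAddCommGroup V] [NormedSpace ℝ V]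
    [CompleteSpace V] {T : V → V} {A : V →L[ℝ] V} {v : V} (hA : HasFDerivAt T A v) {B : Set V}
    (hB : B ∈ 𝓝 v) (hT : TotallyBounded (T '' B)) : IsCompactOperator A := by
  rw [show (A : V → V) = (A : V →ₗ[ℝ] V) from rfl,
    isCompactOperator_iff_isCompact_closure_image_closedBall (A : V →ₗ[ℝ] V) one_pos]
  refine TotallyBounded.isCompact_of_isClosed ?_ isClosed_closure
  refine TotallyBounded.closure ?_
  rw [Metric.totallyBounded_iff]
  intro ε hε
  have h1 := (hasFDerivAt_iff_isLittleO.1 hA).def (show 0 < ε / 4 by positivity)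
  obtain ⟨δ, hδ, hδB⟩ := Metric.mem_nhds_iff.1 (Filter.inter_mem h1 hB)
  obtain ⟨t, htf, ht⟩ := Metric.totallyBounded_iff.1 hT (δ / 2 * (ε / 4)) (by positivity)
  refine ⟨(fun c => (δ / 2)⁻¹ • (c - T v)) '' t, htf.image _, ?_⟩
  rintro _ ⟨h, hh, rfl⟩
  have hh1 : ‖h‖ ≤ 1 := by simpa using hh
  have hnorm : ‖(δ / 2) • h‖ ≤ δ / 2 := by
    rw [norm_smul, Real.norm_of_nonneg (by positivity)]
    nlinarith
  have hmem : v + (δ / 2) • h ∈ Metric.ball v δ := by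
    rw [mem_ball_iff_norm, add_sub_cancel_left]
    linarith
  obtain ⟨hx1, hx2⟩ := hδB hmem
  have hx1' : ‖T (v + (δ / 2) • h) - T v - A ((δ / 2) • h)‖ ≤ ε / 4 * (δ / 2) := by
    have : ‖T (v + (δ / 2) • h) - T v - A (v + (δ / 2) • h - v)‖
      ≤ ε / 4 * ‖v + (δ / 2) • h - v‖ := hx1
    rw [add_sub_cancel_left] at this
    exact this.trans (by gcongr)
  have hx3 := ht (mem_image_of_mem T hx2)
  simp only [mem_iUnion, exists_prop, mem_ball_iff_norm] at hx3
  obtain ⟨c, hct, hc⟩ := hx3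
  simp only [mem_iUnion, exists_prop, exists_mem_image]
  refine ⟨c, hct, ?_⟩
  rw [mem_ball_iff_norm]
  have hid : A h - (δ / 2)⁻¹ • (c - T v) = (δ / 2)⁻¹ •
      ((T (v + (δ / 2) • h) - c) - (T (v + (δ / 2) • h) - T v - A ((δ / 2) • h))) := by
    rw [map_smul]
    have : A h = (δ / 2)⁻¹ • (δ / 2) • A h := by rw [inv_smul_smul₀ (by positivity)]
    conv_lhs => rw [this]
    rw [← smul_sub]
    congr 1
    abel
  change ‖A h - (δ / 2)⁻¹ • (c - T v)‖ < ε
  rw [hid, norm_smul, norm_inv, Real.norm_of_nonneg (by positivity : 0 ≤ δ / 2),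
    inv_mul_lt_iff₀ (by positivity)]
  refine (norm_sub_le _ _).trans_lt ?_
  nlinarith [mul_pos hδ hε]

theorem exists_ball_mul_norm_le_norm_sub_sub {V : Type*} [NormedAddCommGroup V] [NormedSpace ℝ V]
    {T : V → V} {A : V →L[ℝ] V} {v : V} (hA : HasStrictFDerivAt T A v)
    (hc : IsCompactOperator A) (h1 : ∀ h, A h = h → h = 0) :
    ∃ m > 0, ∃ r > 0, ∀ x ∈ Metric.ball v r, ∀ y ∈ Metric.ball v r,
      m * ‖x - y‖ ≤ ‖(x - T x) - (y - T y)‖ := by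
  have hne : ¬ Module.End.HasEigenvalue ((A : V →L[ℝ] V) : Module.End ℝ V) 1 := by
    intro h
    obtain ⟨w, hw⟩ := h.exists_hasEigenvector
    exact hw.2 (h1 w (by simpa using hw.apply_eq_smul))
  obtain ⟨K, hK⟩ := IsCompactOperator.antilipschitz_of_not_hasEigenvalue hc one_ne_zero hne
  have hK' : ∀ h, ‖h‖ ≤ (K + 1) * ‖h - A h‖ := by
    intro h
    have := hK.le_mul_dist h 0
    simp only [dist_eq_norm, sub_zero, map_zero] at this
    have h2 : ‖(A - (1 : ℝ) • (1 : V →L[ℝ] V)) h‖ = ‖h - A h‖ := by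
      rw [norm_sub_rev]; simp
    rw [h2] at this
    nlinarith [norm_nonneg (h - A h)]
  have hKp : (0 : ℝ) < K + 1 := by positivity
  have hs := (hasStrictFDerivAt_iff_isLittleO.1 hA).def
    (show 0 < (2 * ((K : ℝ) + 1))⁻¹ by positivity)
  obtain ⟨r, hr, hrs⟩ := Metric.mem_nhds_iff.1 hs
  refine ⟨(2 * ((K : ℝ) + 1))⁻¹, by positivity, r, hr, fun x hx y hy => ?_⟩
  have hxy : ‖T x - T y - A (x - y)‖ ≤ (2 * ((K : ℝ) + 1))⁻¹ * ‖x - y‖ := by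
    have : (x, y) ∈ Metric.ball (v, v) r := by
      rw [← ball_prod_same]; exact ⟨hx, hy⟩
    exact hrs this
  have h3 : ((K : ℝ) + 1)⁻¹ * ‖x - y‖ ≤ ‖(x - y) - A (x - y)‖ := by
    rw [inv_mul_le_iff₀ hKp]; exact hK' _
  have h4 : ‖(x - y) - A (x - y)‖ ≤ ‖(x - T x) - (y - T y)‖ + ‖T x - T y - A (x - y)‖ := by
    refine le_of_eq_of_le ?_ (norm_add_le _ _)
    congr 1; abel
  have h5 : ((K : ℝ) + 1)⁻¹ = 2 * (2 * ((K : ℝ) + 1))⁻¹ := by field_simp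
  rw [h5] at h3
  linarith

theorem IsCompact.exists_closedBall_mul_norm_le_norm_sub_sub {V : Type*} [NormedAddCommGroup V]
    [NormedSpace ℝ V] {T : V → V} {B K : Set V} (hB : IsOpen B) (hK : IsCompact K) (hKB : K ⊆ B)
    (hT : ∀ v ∈ B, ∃ m > 0, ∃ r > 0, ∀ x ∈ Metric.ball v r, ∀ y ∈ Metric.ball v r,
      m * ‖x - y‖ ≤ ‖(x - T x) - (y - T y)‖) :
    ∃ m > 0, ∃ r > 0, ∀ v ∈ K, Metric.closedBall v r ⊆ B ∧
      ∀ x ∈ Metric.closedBall v r, ∀ y ∈ Metric.closedBall v r,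
        m * ‖x - y‖ ≤ ‖(x - T x) - (y - T y)‖ := by
  refine hK.induction_on (p := fun K => ∃ m > 0, ∃ r > 0, ∀ v ∈ K, Metric.closedBall v r ⊆ B ∧
      ∀ x ∈ Metric.closedBall v r, ∀ y ∈ Metric.closedBall v r,
        m * ‖x - y‖ ≤ ‖(x - T x) - (y - T y)‖) ⟨1, one_pos, 1, one_pos, by simp⟩ ?_ ?_ ?_
  · rintro s t hst ⟨m, hm, r, hr, h⟩
    exact ⟨m, hm, r, hr, fun v hv => h v (hst hv)⟩
  · rintro s t ⟨m, hm, r, hr, h⟩ ⟨m', hm', r', hr', h'⟩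
    refine ⟨min m m', lt_min hm hm', min r r', lt_min hr hr', ?_⟩
    have hl (v : V) : Metric.closedBall v (min r r') ⊆ Metric.closedBall v r :=
      Metric.closedBall_subset_closedBall (min_le_left _ _)
    have hl' (v : V) : Metric.closedBall v (min r r') ⊆ Metric.closedBall v r' :=
      Metric.closedBall_subset_closedBall (min_le_right _ _)
    rintro v (hv | hv)
    · refine ⟨(hl v).trans (h v hv).1, fun x hx y hy => ?_⟩
      refine le_trans ?_ ((h v hv).2 x (hl v hx) y (hl v hy))
      gcongr
      exact min_le_left _ _
    · refine ⟨(hl' v).trans (h' v hv).1, fun x hx y hy => ?_⟩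
      refine le_trans ?_ ((h' v hv).2 x (hl' v hx) y (hl' v hy))
      gcongr
      exact min_le_right _ _
  · intro v hv
    obtain ⟨m, hm, r, hr, h⟩ := hT v (hKB hv)
    obtain ⟨δ, hδ, hδB⟩ := Metric.isOpen_iff.1 hB v (hKB hv)
    have hs : 0 < min r δ / 3 := by positivity
    have hsub : ∀ w ∈ Metric.ball v (min r δ / 3), Metric.closedBall w (min r δ / 3) ⊆
        Metric.ball v (min r δ) := by
      intro w hw
      refine Metric.closedBall_subset_ball' ?_
      have := Metric.mem_ball.1 hw
      linarith
    refine ⟨Metric.ball v (min r δ / 3), mem_nhdsWithin_of_mem_nhds (Metric.ball_mem_nhds _ hs),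
      m, hm, min r δ / 3, hs, fun w hw => ⟨?_, fun x hx y hy => ?_⟩⟩
    · exact (hsub w hw).trans ((Metric.ball_subset_ball (min_le_right _ _)).trans hδB)
    · exact h x (Metric.ball_subset_ball (min_le_left _ _) (hsub w hw hx)) y
        (Metric.ball_subset_ball (min_le_left _ _) (hsub w hw hy))

theorem exists_le_norm_sub_combo_of_isCompact {V : Type*} [NormedAddCommGroup V] [NormedSpace ℝ V]
    {T : V → V} {D Q : Set V} {I : Set ℝ} {b : V} (hD : IsClosed D) (hT : ContinuousOn T D)
    (hQ : IsCompact Q) (hTQ : MapsTo T D Q) (hI : IsCompact I)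
    (hne : ∀ x ∈ D, ∀ t ∈ I, x ≠ (1 - t) • b + t • T x) :
    ∃ η > 0, ∀ x ∈ D, ∀ t ∈ I, η ≤ ‖x - ((1 - t) • b + t • T x)‖ := by
  by_contra! hcon
  choose x hx t ht hxt using fun k : ℕ => hcon (1 / ((k : ℝ) + 1)) (by positivity)
  obtain ⟨⟨s, y⟩, ⟨hs, -⟩, φ, hφ, hlim⟩ := (hI.prod hQ).tendsto_subseq
    (x := fun k => (t k, T (x k))) fun k => ⟨ht k, hTQ (hx k)⟩
  have hlt : Tendsto (fun k => t (φ k)) atTop (𝓝 s) := (Prod.tendsto_iff _ _).1 hlim |>.1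
  have hly : Tendsto (fun k => T (x (φ k))) atTop (𝓝 y) := (Prod.tendsto_iff _ _).1 hlim |>.2
  have h0 : Tendsto (fun k => x k - ((1 - t k) • b + t k • T (x k))) atTop (𝓝 0) :=
    squeeze_zero_norm (fun k => (hxt k).le) tendsto_one_div_add_atTop_nhds_zero_nat
  have hlx : Tendsto (fun k => x (φ k)) atTop (𝓝 ((1 - s) • b + s • y)) := by
    have h := (h0.comp hφ.tendsto_atTop).add
      (((tendsto_const_nhds (x := (1 : ℝ))).sub hlt).smul_const b |>.add (hlt.smul hly))
    simpa using h
  have hmem : (1 - s) • b + s • y ∈ D :=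
    hD.mem_of_tendsto hlx (Eventually.of_forall fun k => hx _)
  have hTy : Tendsto (fun k => T (x (φ k))) atTop (𝓝 (T ((1 - s) • b + s • y))) :=
    (hT _ hmem).tendsto.comp
      (tendsto_nhdsWithin_iff.2 ⟨hlx, Eventually.of_forall fun k => hx _⟩)
  have hyy := tendsto_nhds_unique hly hTy
  refine hne _ hmem s hs ?_
  rw [← hyy]

theorem exists_contDiff_finite_dim_approximation {V : Type*} [NormedAddCommGroup V]
    [NormedSpace ℝ V] [Nontrivial V] {T : V → V} {C : Set V} (hC : IsClosed C)
    (hT : ContinuousOn T C) (hTC : TotallyBounded (T '' C)) {S : Set V} (hS : S.Finite)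
    {ε : ℝ} (hε : 0 < ε) :
    ∃ (n : ℕ) (_ : 0 < n) (L : (Fin n → ℝ) →L[ℝ] V), Function.Injective L ∧ S ⊆ range L ∧
      ∃ g : (Fin n → ℝ) → (Fin n → ℝ), ContDiff ℝ 1 g ∧
        ∀ x, L x ∈ C → ‖L (g x) - T (L x)‖ < ε := by
  obtain ⟨e, he⟩ := exists_ne (0 : V)
  obtain ⟨N, hNf, hN⟩ := Metric.totallyBounded_iff.1 hTC (ε / 2) (by positivity)
  let E : Submodule ℝ V := Submodule.span ℝ (insert e (S ∪ N))
  have hsub : insert e (S ∪ N) ⊆ (E : Set V) := Submodule.subset_span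
  have : FiniteDimensional ℝ E :=
    FiniteDimensional.span_of_finite ℝ ((hS.union hNf).insert e)
  have : Nontrivial E :=
    ⟨⟨e, hsub (mem_insert _ _)⟩, 0, fun h => he (congrArg Subtype.val h)⟩
  let Φ : E ≃L[ℝ] (Fin (Module.finrank ℝ E) → ℝ) :=
    (Module.finBasis ℝ E).equivFun.toContinuousLinearEquiv
  let L : (Fin (Module.finrank ℝ E) → ℝ) →L[ℝ] V := E.subtypeL.comp Φ.symm.toContinuousLinearMap
  have hrange : ∀ v ∈ E, ∃ x, L x = v := fun v hv => ⟨Φ ⟨v, hv⟩, by simp [L]⟩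
  refine ⟨Module.finrank ℝ E, Module.finrank_pos, L, ?_, ?_, ?_⟩
  · exact Subtype.val_injective.comp Φ.symm.injective
  · exact fun v hv => hrange v (hsub (Or.inr (Or.inl hv)))
  · have hconv : ∀ y, Convex ℝ {c | L y ∈ C → ‖L c - T (L y)‖ < ε} := by
      intro y
      by_cases hy : L y ∈ C
      · have : {c | L y ∈ C → ‖L c - T (L y)‖ < ε} = L ⁻¹' Metric.ball (T (L y)) ε := by
          ext c; simp [hy, dist_eq_norm]
        rw [this]
        exact (convex_ball _ _).linear_preimage L.toLinearMap
      · simpa [hy] using convex_univ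
    have hloc : ∀ y, ∃ c, ∀ᶠ z in 𝓝 y, c ∈ {c | L z ∈ C → ‖L c - T (L z)‖ < ε} := by
      intro y
      by_cases hy : L y ∈ C
      · have hmem := hN (mem_image_of_mem T hy)
        simp only [mem_iUnion, exists_prop, mem_ball_iff_norm] at hmem
        obtain ⟨c, hcN, hc⟩ := hmem
        obtain ⟨c, rfl⟩ := hrange c (hsub (Or.inr (Or.inr hcN)))
        refine ⟨c, ?_⟩
        have h1 : Tendsto T (𝓝[C] (L y)) (𝓝 (T (L y))) := hT _ hy
        have h2 := eventually_nhdsWithin_iff.1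
          (h1.eventually (Metric.ball_mem_nhds _ (half_pos hε)))
        filter_upwards [L.continuous.continuousAt.eventually h2] with z hz hzC
        have h3 := hz hzC
        rw [dist_eq_norm] at h3
        have h4 : L c - T (L z) = -(T (L z) - T (L y)) - (T (L y) - L c) := by abel
        rw [h4]
        refine (norm_sub_le _ _).trans_lt ?_
        rw [norm_neg]
        linarith
      · exact ⟨0, (L.continuous.continuousAt.eventually (hC.isOpen_compl.mem_nhds hy)).mono
          fun z hz hzC => absurd hzC hz⟩
    obtain ⟨g, hg⟩ := exists_contMDiffMap_forall_mem_convex_of_local_const (n := 1)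
      (modelWithCornersSelf ℝ (Fin (Module.finrank ℝ E) → ℝ)) hconv hloc
    exact ⟨g, g.contMDiff.contDiff, hg⟩

theorem Set.Finite.of_isCompact_fixedPoints {V : Type*} [NormedAddCommGroup V] {T : V → V}
    {Z : Set V} (hZ : IsCompact Z) (hfix : ∀ z ∈ Z, T z = z)
    (hT : ∀ v ∈ Z, ∃ m > 0, ∃ r > 0, ∀ x ∈ Metric.ball v r, ∀ y ∈ Metric.ball v r,
      m * ‖x - y‖ ≤ ‖(x - T x) - (y - T y)‖) : Z.Finite := by
  refine hZ.induction_on finite_empty (fun s t hst ht => ht.subset hst)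
    (fun s t hs ht => hs.union ht) fun v hv => ?_
  obtain ⟨m, hm, r, hr, h⟩ := hT v hv
  refine ⟨_, inter_mem_nhdsWithin Z (Metric.ball_mem_nhds v hr),
    Set.Subsingleton.finite fun x hx y hy => ?_⟩
  have hxy := h x hx.2 y hy.2
  rw [hfix x hx.1, hfix y hy.1, sub_self, sub_self, sub_self, norm_zero] at hxy
  have h0 : ‖x - y‖ ≤ 0 := by nlinarith
  exact sub_eq_zero.1 (norm_le_zero_iff.1 h0)

end

/-- (Kellogg) Let `B` be a bounded convex open subset of a real Banach space `V`, and let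
`T : closure B → closure B` be a continuous map with precompact image that is continuously
Fréchet differentiable on `B`.  If (a) for each `v ∈ B`, `1` is not an eigenvalue of the
derivative of `T` at `v`, and (b) `T(v) ≠ v` for `v` in the boundary of `B`, then `T` has
exactly one fixed point in `closure B`. -/
theorem stmt7 {V : Type*} [NormedAddCommGroup V] [NormedSpace ℝ V] [CompleteSpace V]
    (B : Set V) (hBne : B.Nonempty) (hBopen : IsOpen B) (hBconv : Convex ℝ B)
    (hBbdd : Bornology.IsBounded B)
    (T : V → V) (hmaps : Set.MapsTo T (closure B) (closure B))
    (hcont : ContinuousOn T (closure B))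
    (hcpt : IsCompact (closure (T '' closure B)))
    (T' : V → (V →L[ℝ] V))
    (hderiv : ∀ v ∈ B, HasFDerivAt T (T' v) v)
    (hderivcont : ContinuousOn T' B)
    (ha : ∀ v ∈ B, ∀ h : V, T' v h = h → h = 0)
    (hb : ∀ v ∈ frontier B, T v ≠ v) :
    ∃! x, x ∈ closure B ∧ T x = x := by
  obtain ⟨b, hbB⟩ := hBne
  rcases subsingleton_or_nontrivial V with hV | hV
  · exact ⟨b, ⟨subset_closure hbB, Subsingleton.elim _ _⟩, fun y _ => Subsingleton.elim _ _⟩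
  have hTtb : TotallyBounded (T '' closure B) := hcpt.totallyBounded.subset subset_closure
  have hTQ : MapsTo T (closure B) (closure (T '' closure B)) :=
    fun x hx => subset_closure (mem_image_of_mem T hx)
  have hloc : ∀ v ∈ B, ∃ m > 0, ∃ r > 0, ∀ x ∈ Metric.ball v r, ∀ y ∈ Metric.ball v r,
      m * ‖x - y‖ ≤ ‖(x - T x) - (y - T y)‖ := by
    intro v hv
    have hBv : B ∈ 𝓝 v := hBopen.mem_nhds hv
    exact exists_ball_mul_norm_le_norm_sub_sub
      (hasStrictFDerivAt_of_hasFDerivAt_of_continuousAt (Filter.mem_of_superset hBv hderiv)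
        (hderivcont.continuousAt hBv))
      ((hderiv v hv).isCompactOperator hBv (hTtb.subset (image_mono subset_closure))) (ha v hv)
  set Z : Set V := {x | x ∈ closure B ∧ T x = x} with hZdef
  have hZB : Z ⊆ B := by
    rintro x ⟨hx, hTx⟩
    by_contra hxB
    exact hb x (by rw [hBopen.frontier_eq]; exact ⟨hx, hxB⟩) hTx
  have hZc : IsCompact Z := by
    have hcl : IsClosed (closure B ∩ (fun x => T x - x) ⁻¹' {0}) :=
      (hcont.sub continuousOn_id).preimage_isClosed_of_isClosed isClosed_closure
        isClosed_singleton
    have hZeq : Z = closure B ∩ (fun x => T x - x) ⁻¹' {0} := by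
      ext x; simp [hZdef, sub_eq_zero]
    rw [← hZeq] at hcl
    exact hcpt.of_isClosed_subset hcl fun x hx => hx.2 ▸ hTQ hx.1
  have hZf : Z.Finite := Set.Finite.of_isCompact_fixedPoints hZc (fun z hz => hz.2)
    fun v hv => hloc v (hZB hv)
  obtain ⟨m, hm, r, hr, hmr⟩ :=
    (hZf.isCompact_convexHull ℝ).exists_closedBall_mul_norm_le_norm_sub_sub hBopen
      (convexHull_min hZB hBconv) hloc
  obtain ⟨η₁, hη₁, hbd⟩ := exists_le_norm_sub_combo_of_isCompact (D := frontier B)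
    (I := Icc 0 1) (b := b) isClosed_frontier (hcont.mono frontier_subset_closure) hcpt
    (hTQ.mono_left frontier_subset_closure) isCompact_Icc (by
      intro x hx t ht hxt
      rcases ht.2.eq_or_lt with rfl | ht1
      · exact hb x hx (by simpa using hxt.symm)
      · have hmem := hBconv.combo_interior_closure_mem_interior (hBopen.interior_eq.symm ▸ hbB)
          (hmaps (frontier_subset_closure hx)) (sub_pos.2 ht1) ht.1 (by ring)
        rw [← hxt] at hmem
        exact hx.2 hmem)
  obtain ⟨η₂, hη₂, hout⟩ := exists_le_norm_sub_combo_of_isCompact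
    (D := closure B \ ⋃ z ∈ Z, Metric.ball z (r / 2)) (I := {1}) (b := b)
    (isClosed_closure.sdiff (isOpen_biUnion fun z _ => Metric.isOpen_ball))
    (hcont.mono sdiff_subset) hcpt (hTQ.mono_left sdiff_subset) isCompact_singleton (by
      rintro x ⟨hx, hxZ⟩ t rfl hxt
      exact hxZ (mem_biUnion (show x ∈ Z from ⟨hx, by simpa using hxt.symm⟩)
        (Metric.mem_ball_self (by positivity))))
  obtain ⟨ε, hε, hε₁, hε₂, hε₃⟩ : ∃ ε > 0, 2 * ε ≤ η₁ ∧ 2 * ε ≤ η₂ ∧ 4 * ε ≤ m * (r / 2) := by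
    have hmr0 : 0 < m * (r / 2) := by positivity
    refine ⟨min (min η₁ η₂) (m * (r / 2)) / 4, by positivity, ?_, ?_, ?_⟩
    · linarith [(min_le_left (min η₁ η₂) (m * (r / 2))).trans (min_le_left _ _)]
    · linarith [(min_le_left (min η₁ η₂) (m * (r / 2))).trans (min_le_right _ _)]
    · linarith [min_le_right (min η₁ η₂) (m * (r / 2))]
  obtain ⟨n, hn, L, hL, hrange, g, hg, hgT⟩ := exists_contDiff_finite_dim_approximation
    isClosed_closure hcont hTtb (hZf.insert b) hε
  obtain ⟨b, rfl⟩ := hrange (mem_insert _ _)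
  have hfin : (L ⁻¹' Z).Finite := hZf.preimage hL.injOn
  have hZL : ∀ z ∈ Z, ∃ x ∈ hfin.toFinset, L x = z := by
    intro z hz
    obtain ⟨x, rfl⟩ := hrange (mem_insert_of_mem _ hz)
    exact ⟨x, hfin.mem_toFinset.2 hz, rfl⟩
  have hmem : ∀ z ∈ hfin.toFinset, L z ∈ Z := fun z hz => hfin.mem_toFinset.1 hz
  have hcard : hfin.toFinset.card = 1 := by
    refine card_eq_one_of_approximation hn hL hBopen hBbdd (T := T) hg (ρ := r / 2) hε hbB
      (fun x hx => (hgT x hx).le) (fun x hx t ht => hε₁.trans (hbd x hx t ht))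
      (fun z hz => (hmem z hz).2) ?_ ?_ ?_ ?_
    · exact fun z hz => (Metric.ball_subset_closedBall.trans
        (Metric.closedBall_subset_closedBall (by linarith))).trans
          (hmr _ (subset_convexHull ℝ Z (hmem z hz))).1
    · intro z hz z' hz' hne
      refine Metric.ball_disjoint_ball ?_
      by_contra! hlt
      have h := (hmr _ (subset_convexHull ℝ Z (hmem z hz))).2 (L z)
        (Metric.mem_closedBall_self hr.le) (L z')
        (by rw [Metric.mem_closedBall, dist_comm]; linarith)
      rw [(hmem z hz).2, (hmem z' hz').2, sub_self, sub_self, sub_self, norm_zero] at h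
      have h0 : ‖L z - L z'‖ ≤ 0 := by nlinarith
      exact hne (hL (sub_eq_zero.1 (norm_le_zero_iff.1 h0)))
    · intro x hx hxZ
      have hxD : x ∉ ⋃ z ∈ Z, Metric.ball z (r / 2) := by
        simp only [mem_iUnion, not_exists]
        intro z hz
        obtain ⟨y, hy, rfl⟩ := hZL z hz
        exact hxZ y hy
      simpa using hε₂.trans (hout x ⟨hx, hxD⟩ 1 rfl)
    · intro z hz z' hz' s hs h hh
      have hp : L z + s • (L z' - L z) ∈ convexHull ℝ Z :=
        (convex_convexHull ℝ Z).add_smul_sub_mem (subset_convexHull ℝ Z (hmem z hz))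
          (subset_convexHull ℝ Z (hmem z' hz')) hs
      obtain ⟨hpB, hpm⟩ := hmr _ hp
      have hph : L z + s • (L z' - L z) + h ∈ Metric.closedBall (L z + s • (L z' - L z)) r := by
        rw [mem_closedBall_iff_norm, add_sub_cancel_left, hh]
        linarith
      have hp0 := Metric.mem_closedBall_self (x := L z + s • (L z' - L z)) hr.le
      refine ⟨hpB hp0, hpB hph, hε₃.trans ?_⟩
      have h1 := hpm _ hph _ hp0
      rwa [add_sub_cancel_left, hh] at h1
  obtain ⟨z, hz⟩ := Finset.card_eq_one.1 hcard
  refine ⟨L z, hmem z (hz ▸ Finset.mem_singleton_self z), fun y hy => ?_⟩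
  obtain ⟨x, hx, rfl⟩ := hZL y hy
  rw [hz, Finset.mem_singleton] at hx
  rw [hx]
end
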